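/- For every bounded open set Ω ⊂ ℝ²×ℝ there exist bounded measurable functions v: ℝ²×ℝ → ℝ², b: ℝ²×ℝ → ℝ and p: ℝ²×ℝ → ℝ such that: (a) for every test field Ψ ∈ C_c^∞(ℝ²×ℝ;ℝ²), ∫∫ (v·∂_tΨ + (v⊗v):∇_xΨ + p div_xΨ) dx dt = 0; (b) for every φ ∈ C_c^∞(ℝ²×ℝ;ℝ²→ℝ), ∫∫ (b ∂_tφ + b v·∇_xφ) dx dt = 0 and ∫∫ v·∇_xφ dx dt = 0; (c) |v(x,t)| = 1 and |b(x,t)| = 1 for almost every (x,t) ∈ Ω; (d) v(x,t) = 0, b(x,t) = 0 and p(x,t) = 0 for almost every (x,t) ∈ (ℝ²×ℝ) \ Ω. -/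

import Mathlib

open MeasureTheory Filter Topology

/-!
The solution is obtained by convex integration. Writing `w = v ⊗ v + p I` and `m = b v`, the
equations become a linear system, asking four space-time fields to be divergence free (`divRow`),
together with pointwise constraints on the state `(v, w, m, b) ∈ ℝ⁸`.

The constraints are satisfied by eight explicit states `vert i`: tracer `1` with velocities `±e₁`,
`±e₂`, and tracer `-1` with velocities `±f₁`, `±f₂`, where `f₁ = (3, 4) / 5` and `f₂ = (4, -3) / 5`.
They are affinely independent and span a simplex which, modulo the trace of `w` (that is, modulo the
pressure), has nonempty interior and contains `0`; `lam i` are its barycentric coordinates. Any two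
of these states are joined by a plane wave of the linear system (`exists_potential`): for
frequency one takes the cross product of `(v, 1)` and `(v', 1)`. Being second derivatives of a
scalar potential, such waves can be cut off in any ball with an arbitrarily small error
(`exists_wave`).

From a state `ν` inside the simplex one can therefore oscillate along the segment joining the two
vertices with the largest barycentric coordinates, with an `L²` gain bounded below by the continuous
function `defect ν` (`hasLocalPert_subSet`). Starting from zero and iterating (`IsSubsol.step`), with
each increment almost orthogonal to the previous subsolutions, gives a sequence which is Cauchy in
`L²` (`cauchySeq_of_almost_orthogonal`). The gains tend to zero, so the limit has zero defect almost
everywhere in `Ω` (`convex_integration`), i.e. it takes there only the eight values, up to the trace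
of `w`, and the trace of `w` defines the pressure.
-/

noncomputable section

/-! ### Almost orthogonal increments -/

/-- A bounded sequence in a Hilbert space whose `k`-th increment is orthogonal, up to `2⁻ᵏ`, to all
the earlier terms is Cauchy: up to a summable error `‖x k‖²` is nondecreasing and bounded, and its
increments dominate `‖x n - x m‖²`. -/
lemma cauchySeq_of_almost_orthogonal {H : Type*} [NormedAddCommGroup H] [InnerProductSpace ℝ H]
    (x : ℕ → H) (R : ℝ) (hR : ∀ k, ‖x k‖ ≤ R)
    (h : ∀ k, ∀ m ≤ k, |inner ℝ (x (k + 1) - x k) (x m)| ≤ (1 / 2 : ℝ) ^ k) :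
    CauchySeq x := by
  have hR0 : 0 ≤ R := (norm_nonneg _).trans (hR 0)
  have key : ∀ m j, |inner ℝ (x (m + j) - x m) (x m)| ≤ 2 * (1 / 2 : ℝ) ^ m * (1 - (1 / 2) ^ j) := by
    intro m j
    induction j with
    | zero => simp
    | succ j ih =>
      have h1 := h (m + j) m (by omega)
      have : x (m + (j + 1)) - x m = (x (m + j + 1) - x (m + j)) + (x (m + j) - x m) := by
        rw [← add_assoc]; abel
      rw [this, inner_add_left]
      refine (abs_add_le _ _).trans ?_
      refine (add_le_add h1 ih).trans (le_of_eq ?_)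
      rw [pow_add, pow_succ]; ring
  have hsq : ∀ m j, ‖x (m + j) - x m‖ ^ 2
      ≤ ‖x (m + j)‖ ^ 2 - ‖x m‖ ^ 2 + 4 * (1 / 2 : ℝ) ^ m * (1 - (1 / 2) ^ j) := by
    intro m j
    have h1 := key m j
    have h2 : ‖x (m + j)‖ ^ 2 = ‖x (m + j) - x m‖ ^ 2 + 2 * inner ℝ (x (m + j) - x m) (x m)
        + ‖x m‖ ^ 2 := by
      rw [← norm_add_sq_real]; simp
    have := (abs_le.1 h1).1
    nlinarith
  set b : ℕ → ℝ := fun m => ‖x m‖ ^ 2 - 4 * (1 / 2 : ℝ) ^ m with hb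
  have hbd : ∀ m j, ‖x (m + j) - x m‖ ^ 2 ≤ b (m + j) - b m := by
    intro m j
    have := hsq m j
    simp only [hb, pow_add]
    nlinarith
  have hmono : Monotone b := by
    refine monotone_nat_of_le_succ fun m => ?_
    have := hbd m 1
    nlinarith [sq_nonneg ‖x (m + 1) - x m‖]
  have hbdd : BddAbove (Set.range b) := by
    refine ⟨R ^ 2, ?_⟩
    rintro _ ⟨m, rfl⟩
    have h1 := hR m
    have h2 : (0 : ℝ) < (1 / 2 : ℝ) ^ m := by positivity
    simp only [hb]
    nlinarith [norm_nonneg (x m), mul_self_le_mul_self (norm_nonneg (x m)) h1]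
  have hc : CauchySeq b := (tendsto_atTop_ciSup hmono hbdd).cauchySeq
  rw [Metric.cauchySeq_iff'] at hc ⊢
  intro ε hε
  obtain ⟨N, hN⟩ := hc (ε ^ 2) (by positivity)
  refine ⟨N, fun n hn => ?_⟩
  obtain ⟨j, rfl⟩ := Nat.exists_eq_add_of_le hn
  have h1 := hN _ hn
  rw [Real.dist_eq] at h1
  rw [dist_eq_norm]
  have h2 := (hbd N j).trans_lt ((le_abs_self _).trans_lt h1)
  exact lt_of_pow_lt_pow_left₀ 2 hε.le h2

/-! ### Abstract convex integration -/

section CI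
variable {Y E : Type*} [NormedAddCommGroup Y] [NormedSpace ℝ Y] [FiniteDimensional ℝ Y]
  [MeasurableSpace Y] [BorelSpace Y]
  [NormedAddCommGroup E] [InnerProductSpace ℝ E] [FiniteDimensional ℝ E]

/-- A subsolution: a continuous field, vanishing off `Ω`, with values in `U`, which satisfies the
linear system. The system is encoded by the set `G` of fields it has to be `L²`-orthogonal to. -/
structure IsSubsol (μ : Measure Y) (G : Set (Y → E)) (U : Set E) (Ω : Set Y) (z : Y → E) :
    Prop where
  cont : Continuous z
  cpt : HasCompactSupport z
  zero_off : ∀ y, y ∉ Ω → z y = 0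
  mem : ∀ y, z y ∈ U
  weak : ∀ g ∈ G, ∫ y, inner ℝ (z y) (g y) ∂μ = 0

/-- Around every state `ν ∈ U` and in every ball there is a mean-zero solution `W` of the linear
system, supported in the ball, such that `ν + W` stays in `U` with a margin `ε` which does not
depend on the ball, and whose squared `L²` norm is at least `β ν` times the volume of the ball. -/
def HasLocalPert (μ : Measure Y) (G : Set (Y → E)) (U : Set E) (β : E → ℝ) : Prop :=
  ∀ ν ∈ U, ∃ ε > 0, ∀ (a : Y) (r : ℝ), 0 < r → ∃ W : Y → E, Continuous W ∧
    (∀ y, y ∉ Metric.closedBall a r → W y = 0) ∧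
    (∀ y e, ‖e‖ < ε → ν + W y + e ∈ U) ∧ ∫ y, W y ∂μ = 0 ∧
    (∀ g ∈ G, ∫ y, inner ℝ (W y) (g y) ∂μ = 0) ∧
    β ν * μ.real (Metric.closedBall a r) ≤ ∫ y, ‖W y‖ ^ 2 ∂μ

/-- One step of convex integration: adding localized perturbations on finitely many disjoint small
balls filling most of `Ω` gives a subsolution at squared `L²` distance almost `∫_Ω β (z y)`. The
increment is almost orthogonal to prescribed continuous fields, since these are almost constant on
the small balls and the perturbations have mean zero. -/
lemma IsSubsol.step {μ : Measure Y} [μ.IsAddHaarMeasure] {G : Set (Y → E)}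
    (hGc : ∀ g ∈ G, Continuous g) {U : Set E} {M : ℝ}
    (hM : ∀ u ∈ U, ‖u‖ ≤ M) {β : E → ℝ} (hβ : Continuous β)
    (hloc : HasLocalPert μ G U β) {Ω : Set Y} (hΩ : IsOpen Ω) (hΩb : Bornology.IsBounded Ω)
    {z : Y → E} (hz : IsSubsol μ G U Ω z) (Gs : Finset (Y → E)) (hGs : ∀ g ∈ Gs, Continuous g)
    {ε : ℝ} (hε : 0 < ε) :
    ∃ z', IsSubsol μ G U Ω z' ∧
      (∀ g ∈ Gs, |∫ y, inner ℝ (z' y - z y) (g y) ∂μ| ≤ ε) ∧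
      (∫ y in Ω, β (z y) ∂μ) - ε ≤ ∫ y, ‖z' y - z y‖ ^ 2 ∂μ := by
  classical
  have hM0 : 0 ≤ M := (norm_nonneg _).trans (hM _ (hz.mem 0))
  have hμΩ : μ Ω ≠ ⊤ := hΩb.measure_lt_top.ne
  set K : ℝ := (1 + 2 * M) * (1 + μ.real Ω) with hK
  have hmr : 0 ≤ μ.real Ω := measureReal_nonneg
  have hK0 : 0 < K := by positivity
  set δ : ℝ := ε / (2 * K) with hδ
  have hδ0 : 0 < δ := by positivity
  have hδK : δ * K = ε / 2 := by rw [hδ]; field_simp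
  choose! e he0 hW using hloc
  -- balls of radius at most `R a` around `a` stay in `Ω`, and `z`, `β ∘ z` and the fields of `Gs`
  -- oscillate little on them
  have hrad : ∀ a ∈ Ω, ∃ R > 0, ∀ y ∈ Metric.closedBall a R, y ∈ Ω ∧ ‖z y - z a‖ < e (z a) ∧
      |β (z y) - β (z a)| < δ ∧ ∀ g ∈ Gs, ‖g y - g a‖ < δ := by
    intro a ha
    have h1 : ∀ᶠ y in 𝓝 a, y ∈ Ω := hΩ.mem_nhds ha
    have h2 : ∀ᶠ y in 𝓝 a, ‖z y - z a‖ < e (z a) := by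
      simpa [dist_eq_norm] using Metric.tendsto_nhds.1 hz.cont.continuousAt _ (he0 _ (hz.mem a))
    have h3 : ∀ᶠ y in 𝓝 a, |β (z y) - β (z a)| < δ := by
      simpa [Real.dist_eq] using
        Metric.tendsto_nhds.1 (hβ.comp hz.cont).continuousAt δ hδ0
    have h4 : ∀ᶠ y in 𝓝 a, ∀ g ∈ Gs, ‖g y - g a‖ < δ := by
      rw [Filter.eventually_all_finset]
      intro g hg
      simpa [dist_eq_norm] using Metric.tendsto_nhds.1 (hGs g hg).continuousAt δ hδ0
    obtain ⟨R, hR, hball⟩ := Metric.nhds_basis_closedBall.eventually_iff.1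
      (h1.and (h2.and (h3.and h4)))
    exact ⟨R, hR, fun y hy => hball hy⟩
  choose! R hR0 hR using hrad
  obtain ⟨t, r, htc, htΩ, htr, hcov, hdisj⟩ :=
    Besicovitch.exists_disjoint_closedBall_covering_ae μ (fun _ => Set.univ) Ω
      (fun x _ d hd => by simpa using hd) R hR0
  have hr0 : ∀ x ∈ t, 0 < r x := fun x hx => (htr x hx).2.1
  have hrR : ∀ x ∈ t, ∀ y ∈ Metric.closedBall x (r x), y ∈ Ω ∧ ‖z y - z x‖ < e (z x) ∧
      |β (z y) - β (z x)| < δ ∧ ∀ g ∈ Gs, ‖g y - g x‖ < δ := fun x hx y hy =>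
    hR x (htΩ hx) y (Metric.closedBall_subset_closedBall (htr x hx).2.2.le hy)
  have hW' : ∀ x : t, ∃ W : Y → E, Continuous W ∧
    (∀ y, y ∉ Metric.closedBall (x : Y) (r x) → W y = 0) ∧
    (∀ y e', ‖e'‖ < e (z x) → z x + W y + e' ∈ U) ∧ ∫ y, W y ∂μ = 0 ∧
    (∀ g ∈ G, ∫ y, inner ℝ (W y) (g y) ∂μ = 0) ∧
    β (z x) * μ.real (Metric.closedBall (x : Y) (r x)) ≤ ∫ y, ‖W y‖ ^ 2 ∂μ :=
    fun x => hW (z x) (hz.mem x) x (r x) (hr0 x x.2)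
  choose W hWc hW0 hWU hWm hWs hWg using hW'
  have : Countable t := htc.to_subtype
  set B : t → Set Y := fun x => Metric.closedBall (x : Y) (r x) with hB
  have hBd : Pairwise (Function.onFun Disjoint B) := by
    intro x y hxy
    exact hdisj x.2 y.2 (fun h => hxy (Subtype.ext h))
  have hBm : ∀ x, MeasurableSet (B x) := fun x => Metric.isClosed_closedBall.measurableSet
  have hBΩ : (⋃ x, B x) ⊆ Ω := by
    intro y hy
    obtain ⟨x, hx⟩ := Set.mem_iUnion.1 hy
    exact (hrR x x.2 y hx).1
  have hae : (⋃ x, B x) =ᵐ[μ] Ω := by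
    refine (ae_le_set.2 ?_).antisymm (ae_le_set.2 ?_)
    · rw [Set.sdiff_eq_empty.2 hBΩ]; simp
    · rwa [Set.biUnion_eq_iUnion] at hcov
  have hβint : Integrable (fun y => β (z y)) (μ.restrict Ω) := by
    have hcl : IsCompact (closure Ω) := hΩb.isCompact_closure
    exact ((hβ.comp hz.cont).continuousOn.integrableOn_compact hcl).mono_set subset_closure
  have hsum : HasSum (fun x => ∫ y in B x, β (z y) ∂μ) (∫ y in Ω, β (z y) ∂μ) := by
    rw [← setIntegral_congr_set hae]
    exact hasSum_integral_iUnion hBm hBd (IntegrableOn.mono_set hβint hBΩ)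
  obtain ⟨s, hs⟩ := (hsum.eventually (lt_mem_nhds
    (show (∫ y in Ω, β (z y) ∂μ) - ε / 2 < _ by linarith))).exists
  have hBfin : ∀ x, μ (B x) ≠ ⊤ := fun x => Metric.isBounded_closedBall.measure_lt_top.ne
  have hsB : ∑ x ∈ s, μ.real (B x) ≤ μ.real Ω := by
    rw [← measureReal_biUnion_finset (fun x _ y _ h => hBd h) (fun x _ => hBm x)
      (fun x _ => hBfin x)]
    exact measureReal_mono ((Set.iUnion₂_subset fun x _ => Set.subset_iUnion B x).trans hBΩ) hμΩ
  have hWcs : ∀ x, HasCompactSupport (W x) := fun x =>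
    HasCompactSupport.intro (isCompact_closedBall (x : Y) (r x)) (hW0 x)
  have hWi : ∀ x, Integrable (W x) μ := fun x =>
    (hWc x).integrable_of_hasCompactSupport (hWcs x)
  have hWM : ∀ x y, ‖W x y‖ ≤ 2 * M := by
    intro x y
    have h1 := hM _ (hWU x y 0 (by simpa using he0 _ (hz.mem _)))
    have h2 := hM _ (hz.mem x)
    have : W x y = (z x + W x y + 0) - z x := by abel
    rw [this]
    exact (norm_sub_le _ _).trans (by linarith)
  have hone : ∀ x : t, ∀ y ∈ B x, ∀ x', x' ≠ x → W x' y = 0 := by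
    intro x y hy x' hne
    exact hW0 x' y (fun h => Set.disjoint_left.1 (hBd hne) h hy)
  refine ⟨fun y => z y + ∑ x ∈ s, W x y, ⟨?_, ?_, ?_, ?_, ?_⟩, ?_, ?_⟩
  · exact hz.cont.add (continuous_finsetSum _ fun x _ => hWc x)
  · refine HasCompactSupport.intro hΩb.isCompact_closure fun y hy => ?_
    have hy' : y ∉ Ω := fun h => hy (subset_closure h)
    rw [hz.zero_off y hy', Finset.sum_eq_zero, add_zero]
    exact fun x _ => hW0 x y (fun h => hy' (hrR x x.2 y h).1)
  · intro y hy'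
    rw [hz.zero_off y hy', Finset.sum_eq_zero, add_zero]
    exact fun x _ => hW0 x y (fun h => hy' (hrR x x.2 y h).1)
  · intro y
    by_cases hy : ∃ x ∈ s, y ∈ B x
    · obtain ⟨x, hx, hyx⟩ := hy
      rw [Finset.sum_eq_single_of_mem x hx (fun x' _ hne => hone x y hyx x' hne)]
      have := hWU x y (z y - z x) (hrR x x.2 y hyx).2.1
      convert this using 1; abel
    · push Not at hy
      rw [Finset.sum_eq_zero (fun x hx => hW0 x y (hy x hx)), add_zero]
      exact hz.mem y
  · intro g hg
    have hi : ∀ f : Y → E, Continuous f → HasCompactSupport f →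
        Integrable (fun y => inner ℝ (f y) (g y)) μ := fun f hf hfc =>
      (hf.inner (hGc g hg)).integrable_of_hasCompactSupport
        (hfc.mono (fun y hy => by
          rw [Function.mem_support] at hy ⊢
          exact fun h => hy (by simp [h])))
    simp only [inner_add_left, sum_inner]
    rw [integral_add (hi z hz.cont hz.cpt) (integrable_finsetSum _ fun x _ => hi _ (hWc x) (hWcs x)),
      integral_finsetSum _ fun x _ => hi _ (hWc x) (hWcs x), hz.weak g hg,
      Finset.sum_eq_zero fun x _ => hWs x g hg, add_zero]
  · intro g hg
    have hi : ∀ x, Integrable (fun y => inner ℝ (W x y) (g y)) μ := fun x =>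
      ((hWc x).inner (hGs g hg)).integrable_of_hasCompactSupport
        ((hWcs x).mono (fun y hy => by
          rw [Function.mem_support] at hy ⊢
          exact fun h => hy (by simp [h])))
    simp only [add_sub_cancel_left, sum_inner]
    rw [integral_finsetSum _ fun x _ => hi x]
    have hb : ∀ x : t, |∫ y, inner ℝ (W x y) (g y) ∂μ| ≤ (2 * M * δ) * μ.real (B x) := by
      intro x
      have h0 : ∫ y, inner ℝ (W x y) (g x) ∂μ = 0 := by
        have : ∀ y, inner ℝ (W x y) (g x) = innerSL ℝ (g x) (W x y) := fun y => by
          rw [innerSL_apply_apply, real_inner_comm]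
        simp_rw [this]
        rw [ContinuousLinearMap.integral_comp_comm _ (hWi x), hWm x, map_zero]
      have h1 : ∫ y, inner ℝ (W x y) (g y) ∂μ = ∫ y in B x, inner ℝ (W x y) (g y - g x) ∂μ := by
        rw [setIntegral_eq_integral_of_forall_compl_eq_zero (fun y hy => by rw [hW0 x y hy]; simp)]
        simp only [inner_sub_right]
        rw [integral_sub (hi x) ((hWi x).inner_const _), h0, sub_zero]
      rw [h1, ← Real.norm_eq_abs]
      refine norm_setIntegral_le_of_norm_le_const (hBfin x).lt_top fun y hy => ?_
      refine (norm_inner_le_norm _ _).trans ?_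
      exact mul_le_mul (hWM x y) ((hrR x x.2 y hy).2.2.2 g hg).le (norm_nonneg _) (by positivity)
    refine (Finset.abs_sum_le_sum_abs _ _).trans ((Finset.sum_le_sum fun x _ => hb x).trans ?_)
    rw [← Finset.mul_sum]
    have : 2 * M * δ * ∑ x ∈ s, μ.real (B x) ≤ 2 * M * δ * μ.real Ω :=
      mul_le_mul_of_nonneg_left hsB (by positivity)
    have h2 : 2 * M * δ * μ.real Ω ≤ δ * K := by
      rw [hK]; nlinarith [mul_nonneg hδ0.le hM0, mul_nonneg hδ0.le hmr]
    linarith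
  · simp only [add_sub_cancel_left]
    have hsq : ∀ y, ‖∑ x ∈ s, W x y‖ ^ 2 = ∑ x ∈ s, ‖W x y‖ ^ 2 := by
      intro y
      by_cases hy : ∃ x ∈ s, y ∈ B x
      · obtain ⟨x, hx, hyx⟩ := hy
        rw [Finset.sum_eq_single_of_mem x hx (fun x' _ hne => hone x y hyx x' hne),
          Finset.sum_eq_single_of_mem x hx (fun x' _ hne => by rw [hone x y hyx x' hne]; simp)]
      · push Not at hy
        rw [Finset.sum_eq_zero (fun x hx => hW0 x y (hy x hx)),
          Finset.sum_eq_zero (fun x hx => by rw [hW0 x y (hy x hx)]; simp)]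
        simp
    simp_rw [hsq]
    rw [integral_finsetSum]
    · have hb : ∀ x : t, ∫ y in B x, β (z y) ∂μ ≤ (∫ y, ‖W x y‖ ^ 2 ∂μ) + δ * μ.real (B x) := by
        intro x
        have h1 : ∫ y in B x, β (z y) ∂μ ≤ ∫ y in B x, (β (z x) + δ) ∂μ := by
          refine setIntegral_mono_on (IntegrableOn.mono_set hβint
            ((Set.subset_iUnion B x).trans hBΩ)) ?_ (hBm x) fun y hy => ?_
          · exact integrableOn_const (hBfin x)
          · have := (abs_lt.1 (hrR x x.2 y hy).2.2.1).2
            linarith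
        rw [setIntegral_const, smul_eq_mul] at h1
        have := hWg x
        simp only [hB] at h1 ⊢
        nlinarith
      have h1 := Finset.sum_le_sum fun x (_ : x ∈ s) => hb x
      rw [Finset.sum_add_distrib, ← Finset.mul_sum] at h1
      have h2 : δ * ∑ x ∈ s, μ.real (B x) ≤ δ * μ.real Ω :=
        mul_le_mul_of_nonneg_left hsB hδ0.le
      have h3 : δ * μ.real Ω ≤ δ * K := by
        rw [hK]; nlinarith [mul_nonneg hδ0.le hM0, mul_nonneg hδ0.le hmr,
          mul_nonneg (mul_nonneg hδ0.le hmr) hM0]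
      linarith
    · intro x _
      exact ((hWc x).norm.pow 2).integrable_of_hasCompactSupport
        ((hWcs x).mono (fun y hy => by
          rw [Function.mem_support] at hy ⊢
          exact fun h => hy (by simp [h])))


/-- Iteration of `IsSubsol.step` from the zero subsolution, the `k`-th increment being almost
orthogonal to all the previous subsolutions. -/
lemma exists_subsol_seq {μ : Measure Y} [μ.IsAddHaarMeasure] {G : Set (Y → E)}
    (hGc : ∀ g ∈ G, Continuous g) {U : Set E} (hU0 : (0 : E) ∈ U) {M : ℝ}
    (hM : ∀ u ∈ U, ‖u‖ ≤ M) {β : E → ℝ} (hβ : Continuous β)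
    (hloc : HasLocalPert μ G U β) {Ω : Set Y} (hΩ : IsOpen Ω) (hΩb : Bornology.IsBounded Ω) :
    ∃ z : ℕ → Y → E, (∀ k, IsSubsol μ G U Ω (z k)) ∧
      (∀ k, ∀ m ≤ k, |∫ y, inner ℝ (z (k + 1) y - z k y) (z m y) ∂μ| ≤ (1 / 2 : ℝ) ^ k) ∧
      (∀ k, (∫ y in Ω, β (z k y) ∂μ) - (1 / 2 : ℝ) ^ k ≤ ∫ y, ‖z (k + 1) y - z k y‖ ^ 2 ∂μ) := by
  classical
  -- the state records the current subsolution together with all the previous ones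
  let State := {p : (Y → E) × Finset (Y → E) //
    IsSubsol μ G U Ω p.1 ∧ p.1 ∈ p.2 ∧ ∀ g ∈ p.2, Continuous g}
  have hstep : ∀ (k : ℕ) (p : State), ∃ q : State, q.1.2 = insert q.1.1 p.1.2 ∧
      (∀ g ∈ p.1.2, |∫ y, inner ℝ (q.1.1 y - p.1.1 y) (g y) ∂μ| ≤ (1 / 2 : ℝ) ^ k) ∧
      (∫ y in Ω, β (p.1.1 y) ∂μ) - (1 / 2 : ℝ) ^ k ≤ ∫ y, ‖q.1.1 y - p.1.1 y‖ ^ 2 ∂μ := by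
    rintro k ⟨⟨z, L⟩, hz, hzL, hL⟩
    obtain ⟨z', hz', h1, h2⟩ := hz.step hGc hM hβ hloc hΩ hΩb L hL
      (show (0 : ℝ) < (1 / 2 : ℝ) ^ k by positivity)
    refine ⟨⟨⟨z', insert z' L⟩, hz', Finset.mem_insert_self _ _, ?_⟩, rfl, h1, h2⟩
    intro g hg
    rcases Finset.mem_insert.1 hg with rfl | hg
    · exact hz'.cont
    · exact hL g hg
  choose next hn1 hn2 hn3 using hstep
  have h0 : IsSubsol μ G U Ω (fun _ => (0 : E)) :=
    ⟨continuous_const, HasCompactSupport.zero, fun _ _ => rfl, fun _ => hU0, fun g _ => by simp⟩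
  let S : ℕ → State := fun n => Nat.rec
    ⟨⟨fun _ => 0, {fun _ => 0}⟩, h0, Finset.mem_singleton_self _, fun g hg => by
      rw [Finset.mem_singleton.1 hg]; exact continuous_const⟩ (fun k p => next k p) n
  have hS : ∀ k, S (k + 1) = next k (S k) := fun k => rfl
  have hmem : ∀ k, ∀ m ≤ k, (S m).1.1 ∈ (S k).1.2 := by
    intro k m hmk
    induction k, hmk using Nat.le_induction with
    | base => exact (S m).2.2.1
    | succ k _ ih =>
      rw [hS, hn1]
      exact Finset.mem_insert_of_mem ih
  refine ⟨fun k => (S k).1.1, fun k => (S k).2.1, fun k m hm => ?_, fun k => ?_⟩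
  · have := hn2 k (S k) _ (hmem k m hm)
    rwa [← hS] at this
  · have := hn3 k (S k)
    rwa [← hS] at this

/-- Abstract convex integration: if the gain function `β` is continuous and local perturbations
exist, then there is a solution of the linear system, supported in `Ω`, with values in `closure U`
and on which `β` vanishes almost everywhere in `Ω`. -/
theorem convex_integration [MeasurableSpace E] [BorelSpace E]
    {μ : Measure Y} [μ.IsAddHaarMeasure] {G : Set (Y → E)}
    (hGc : ∀ g ∈ G, Continuous g) (hGs : ∀ g ∈ G, HasCompactSupport g)
    {U : Set E} (hU0 : (0 : E) ∈ U) {M : ℝ}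
    (hM : ∀ u ∈ U, ‖u‖ ≤ M) {β : E → ℝ} (hβ : Continuous β) (hβ0 : ∀ u, 0 ≤ β u)
    {B : ℝ} (hβB : ∀ u ∈ U, β u ≤ B)
    (hloc : HasLocalPert μ G U β) {Ω : Set Y} (hΩ : IsOpen Ω) (hΩb : Bornology.IsBounded Ω) :
    ∃ z : Y → E, Measurable z ∧ (∀ᵐ y ∂μ, z y ∈ closure U) ∧
      (∀ᵐ y ∂μ, y ∉ Ω → z y = 0) ∧ (∀ᵐ y ∂μ, y ∈ Ω → β (z y) = 0) ∧
      ∀ g ∈ G, ∫ y, inner ℝ (z y) (g y) ∂μ = 0 := by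
  obtain ⟨z, hz, horth, hgain⟩ := exists_subsol_seq hGc hU0 hM hβ hloc hΩ hΩb
  have hM0 : 0 ≤ M := (norm_nonneg _).trans (hM _ hU0)
  have hμΩ : μ Ω ≠ ⊤ := hΩb.measure_lt_top.ne
  have hmem : ∀ k, MemLp (z k) 2 μ := fun k =>
    (hz k).cont.memLp_of_hasCompactSupport (hz k).cpt
  set x : ℕ → Lp E 2 μ := fun k => (hmem k).toLp (z k) with hx
  have hxae : ∀ k, x k =ᵐ[μ] z k := fun k => (hmem k).coeFn_toLp
  have hnorm : ∀ k, ‖x k‖ ^ 2 ≤ M ^ 2 * μ.real Ω := by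
    intro k
    rw [← real_inner_self_eq_norm_sq, L2.inner_def]
    have h1 : ∫ a, inner ℝ (x k a) (x k a) ∂μ = ∫ a in Ω, ‖z k a‖ ^ 2 ∂μ := by
      rw [setIntegral_eq_integral_of_forall_compl_eq_zero
        (fun y hy => by rw [(hz k).zero_off y hy]; simp)]
      refine integral_congr_ae ?_
      filter_upwards [hxae k] with a ha
      rw [ha, real_inner_self_eq_norm_sq]
    rw [h1]
    refine (le_abs_self _).trans ?_
    rw [← Real.norm_eq_abs]
    refine norm_setIntegral_le_of_norm_le_const hμΩ.lt_top fun y _ => ?_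
    rw [norm_pow, norm_norm]
    exact pow_le_pow_left₀ (norm_nonneg _) (hM _ ((hz k).mem y)) 2
  have hdiff : ∀ k, ‖x (k + 1) - x k‖ ^ 2 = ∫ y, ‖z (k + 1) y - z k y‖ ^ 2 ∂μ := by
    intro k
    rw [← real_inner_self_eq_norm_sq, L2.inner_def]
    refine integral_congr_ae ?_
    filter_upwards [hxae k, hxae (k + 1), Lp.coeFn_sub (x (k + 1)) (x k)] with a h1 h2 h3
    rw [h3, Pi.sub_apply, h1, h2, real_inner_self_eq_norm_sq]
  have hC : CauchySeq x := by
    refine cauchySeq_of_almost_orthogonal x (Real.sqrt (M ^ 2 * μ.real Ω)) (fun k => ?_) ?_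
    · exact Real.le_sqrt_of_sq_le (hnorm k)
    · intro k m hm
      refine le_of_eq_of_le ?_ (horth k m hm)
      rw [L2.inner_def]
      congr 1
      refine integral_congr_ae ?_
      filter_upwards [hxae k, hxae (k + 1), hxae m, Lp.coeFn_sub (x (k + 1)) (x k)]
        with a h1 h2 h4 h3
      rw [h3, Pi.sub_apply, h1, h2, h4]
  obtain ⟨X, hX⟩ := cauchySeq_tendsto_of_complete hC
  have hβlim : Tendsto (fun k => ∫ y in Ω, β (z k y) ∂μ) atTop (𝓝 0) := by
    have h1 : Tendsto (fun k => ‖x (k + 1) - x k‖ ^ 2 + (1 / 2 : ℝ) ^ k) atTop (𝓝 0) := by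
      have h2 : Tendsto (fun k => x (k + 1) - x k) atTop (𝓝 (X - X)) :=
        ((tendsto_add_atTop_iff_nat 1).2 hX).sub hX
      have h3 := (h2.norm.pow 2).add
        (tendsto_pow_atTop_nhds_zero_of_lt_one (by norm_num : (0:ℝ) ≤ 1 / 2) (by norm_num))
      simpa using h3
    refine squeeze_zero (fun k => integral_nonneg fun y => hβ0 _) (fun k => ?_) h1
    rw [hdiff]
    linarith [hgain k]
  obtain ⟨ns, hns, hae⟩ := (tendstoInMeasure_of_tendsto_Lp hX).exists_seq_tendsto_ae
  have hae' : ∀ᵐ y ∂μ, Tendsto (fun i => z (ns i) y) atTop (𝓝 (X y)) := by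
    filter_upwards [hae, ae_all_iff.2 hxae] with y h1 h2
    simpa only [h2] using h1
  have hXm : Measurable X := (Lp.stronglyMeasurable X).measurable
  refine ⟨X, hXm, ?_, ?_, ?_, ?_⟩
  · filter_upwards [hae'] with y hy
    exact mem_closure_of_tendsto hy (Eventually.of_forall fun i => (hz (ns i)).mem y)
  · filter_upwards [hae'] with y hy hyΩ
    refine tendsto_nhds_unique hy ?_
    simp only [(hz _).zero_off y hyΩ]
    exact tendsto_const_nhds
  · have hlim : Tendsto (fun i => ∫ y in Ω, β (z (ns i) y) ∂μ) atTop
        (𝓝 (∫ y in Ω, β (X y) ∂μ)) := by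
      refine tendsto_integral_of_dominated_convergence (fun _ => B)
        (fun i => (hβ.comp (hz _).cont).aestronglyMeasurable) ?_ ?_ ?_
      · exact integrableOn_const hμΩ
      · intro i
        refine Eventually.of_forall fun y => ?_
        rw [Real.norm_eq_abs, abs_of_nonneg (hβ0 _)]
        exact hβB _ ((hz _).mem y)
      · refine ae_restrict_of_ae ?_
        filter_upwards [hae'] with y hy
        exact (hβ.tendsto _).comp hy
    have hzero := tendsto_nhds_unique hlim (hβlim.comp hns.tendsto_atTop)
    rw [integral_eq_zero_iff_of_nonneg (fun y => hβ0 _)] at hzero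
    · rw [Filter.EventuallyEq, ae_restrict_iff' hΩ.measurableSet] at hzero
      exact hzero
    · refine Integrable.mono' (g := fun _ => B) (integrableOn_const hμΩ)
        (hβ.measurable.comp hXm).aestronglyMeasurable ?_
      refine ae_restrict_of_ae ?_
      filter_upwards [hae'] with y hy
      rw [Real.norm_eq_abs, abs_of_nonneg (hβ0 _)]
      exact le_of_tendsto ((hβ.tendsto _).comp hy)
        (Eventually.of_forall fun i => hβB _ ((hz _).mem y))
  · intro g hg
    have hgi : Integrable g μ := (hGc g hg).integrable_of_hasCompactSupport (hGs g hg)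
    have hlim : Tendsto (fun i => ∫ y, inner ℝ (z (ns i) y) (g y) ∂μ) atTop
        (𝓝 (∫ y, inner ℝ (X y) (g y) ∂μ)) := by
      refine tendsto_integral_of_dominated_convergence (fun y => M * ‖g y‖)
        (fun i => ((hz _).cont.inner (hGc g hg)).aestronglyMeasurable) (hgi.norm.const_mul M) ?_ ?_
      · intro i
        refine Eventually.of_forall fun y => ?_
        refine (norm_inner_le_norm _ _).trans ?_
        exact mul_le_mul_of_nonneg_right (hM _ ((hz _).mem y)) (norm_nonneg _)
      · filter_upwards [hae'] with y hy
        exact hy.inner tendsto_const_nhds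
    simp only [(hz _).weak g hg] at hlim
    exact (tendsto_nhds_unique hlim tendsto_const_nhds)

end CI

/-! ### Test functions on space-time -/

/-- Space-time `ℝ² × ℝ`, with points `y = (x, t)`. -/
abbrev SpT := (Fin 2 → ℝ) × ℝ

instance : (volume : Measure SpT).IsAddHaarMeasure :=
  Measure.prod.instIsAddHaarMeasure _ _

/-- The coordinate directions `x₁`, `x₂`, `t` of space-time. -/
def eY : Fin 3 → SpT := ![(Pi.single 0 1, 0), (Pi.single 1 1, 0), (0, 1)]

/-- The derivative of `F` in the direction `a`. -/
def pd (a : SpT) (F : SpT → ℝ) : SpT → ℝ := fun y => fderiv ℝ F y a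

/-- `F` is a smooth, compactly supported scalar function. -/
def IsTest (F : SpT → ℝ) : Prop := ContDiff ℝ (⊤ : ℕ∞) F ∧ HasCompactSupport F

lemma pd_contDiff {F : SpT → ℝ} (hF : ContDiff ℝ (⊤ : ℕ∞) F) (a : SpT) :
    ContDiff ℝ (⊤ : ℕ∞) (pd a F) := by
  unfold pd
  exact (hF.fderiv_right (m := (⊤ : ℕ∞)) (by norm_cast)).clm_apply contDiff_const

lemma IsTest.pd {F : SpT → ℝ} (hF : IsTest F) (a : SpT) : IsTest (pd a F) :=
  ⟨pd_contDiff hF.1 a, hF.2.fderiv_apply ℝ a⟩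

lemma IsTest.integrable_mul {F G : SpT → ℝ} (hF : IsTest F) (hG : Continuous G) :
    Integrable (fun y => F y * G y) :=
  (hF.1.continuous.mul hG).integrable_of_hasCompactSupport hF.2.mul_right

lemma pd_comm {F : SpT → ℝ} (hF : ContDiff ℝ (⊤ : ℕ∞) F) (a b : SpT) :
    pd a (pd b F) = pd b (pd a F) := by
  funext y
  have h1 : IsSymmSndFDerivAt ℝ F y :=
    hF.contDiffAt.isSymmSndFDerivAt (by
      rw [minSmoothness_of_isRCLikeNormedField]; exact WithTop.coe_le_coe.2 (le_top : (2 : ℕ∞) ≤ ⊤))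
  have hd : DifferentiableAt ℝ (fderiv ℝ F) y :=
    ((hF.fderiv_right (m := (⊤ : ℕ∞)) (by norm_cast)).differentiable (by simp)).differentiableAt
  have h2 : ∀ a b : SpT, pd a (pd b F) y = fderiv ℝ (fderiv ℝ F) y a b := by
    intro a b
    unfold pd
    rw [fderiv_clm_apply hd (differentiableAt_const b)]
    simp
  rw [h2, h2]
  exact h1 a b

lemma integral_mul_pd {F G : SpT → ℝ} (hF : IsTest F) (hG : ContDiff ℝ (⊤ : ℕ∞) G) (a : SpT) :
    ∫ y, F y * pd a G y = -∫ y, pd a F y * G y := by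
  refine integral_mul_fderiv_eq_neg_fderiv_mul_of_integrable ?_ ?_ ?_ ?_ ?_
  · exact (hF.pd a).integrable_mul hG.continuous
  · exact hF.integrable_mul (pd_contDiff hG a).continuous
  · exact hF.integrable_mul hG.continuous
  · exact fun x _ => (hF.1.differentiable (by simp)).differentiableAt
  · exact fun x _ => (hG.differentiable (by simp)).differentiableAt

lemma integral_pd {F : SpT → ℝ} (hF : IsTest F) (a : SpT) : ∫ y, pd a F y = 0 := by
  have := integral_mul_pd hF (contDiff_const (c := (1 : ℝ))) a
  have h0 : pd a (fun _ : SpT => (1 : ℝ)) = 0 := by funext y; simp [pd]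
  simp only [h0, Pi.zero_apply, mul_zero, integral_zero, mul_one] at this
  linarith

/-- `∫ ∂ⱼ∂ₖF ∂ₗψ`; for test functions it is symmetric in the three indices, which reduces the weak
form of a constant coefficient system to algebra. -/
def triple (F ψ : SpT → ℝ) (j k l : Fin 3) : ℝ :=
  ∫ y, pd (eY j) (pd (eY k) F) y * pd (eY l) ψ y

lemma triple_swap_left {F : SpT → ℝ} (hF : IsTest F) (ψ : SpT → ℝ) (j k l : Fin 3) :
    triple F ψ j k l = triple F ψ k j l := by
  unfold triple
  rw [pd_comm hF.1]

lemma triple_swap_right {F ψ : SpT → ℝ} (hF : IsTest F) (hψ : IsTest ψ) (j k l : Fin 3) :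
    triple F ψ j k l = triple F ψ j l k := by
  have h : ∀ j k l : Fin 3, triple F ψ j k l
      = -∫ y, pd (eY k) F y * pd (eY j) (pd (eY l) ψ) y := by
    intro j k l
    rw [integral_mul_pd (hF.pd _) (pd_contDiff hψ.1 _), neg_neg]
    rfl
  rw [triple_swap_left hF, h, pd_comm hψ.1, ← h, triple_swap_left hF]

/-! ### Localized plane waves -/

/-- The plane wave `cos (N ℓ + θ)` cut off by `φ`. -/
def osc (N : ℝ) (ℓ : SpT →L[ℝ] ℝ) (θ : ℝ) (φ : SpT → ℝ) : SpT → ℝ :=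
  fun y => φ y * Real.cos (N * ℓ y + θ)

lemma osc_isTest {N : ℝ} {ℓ : SpT →L[ℝ] ℝ} {θ : ℝ} {φ : SpT → ℝ} (hφ : IsTest φ) :
    IsTest (osc N ℓ θ φ) := by
  refine ⟨hφ.1.mul ?_, hφ.2.mul_right⟩
  exact Real.contDiff_cos.comp ((contDiff_const.mul ℓ.contDiff).add contDiff_const)

lemma pd_osc {N : ℝ} {ℓ : SpT →L[ℝ] ℝ} {θ : ℝ} {φ : SpT → ℝ}
    (hφ : ContDiff ℝ (⊤ : ℕ∞) φ) (a : SpT) :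
    pd a (osc N ℓ θ φ) = osc N ℓ θ (pd a φ) + (N * ℓ a) • osc N ℓ (θ + Real.pi / 2) φ := by
  funext y
  have h1 : HasFDerivAt φ (fderiv ℝ φ y) y :=
    ((hφ.differentiable (by simp)).differentiableAt).hasFDerivAt
  have h2 : HasFDerivAt (fun y => N * ℓ y + θ) (N • ℓ) y :=
    (ℓ.hasFDerivAt.const_mul N).add_const θ
  have h3 := (h1.mul h2.cos).fderiv
  have h4 : Real.cos (N * ℓ y + (θ + Real.pi / 2)) = -Real.sin (N * ℓ y + θ) := by
    rw [← add_assoc, Real.cos_add_pi_div_two]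
  have h5 : pd a (osc N ℓ θ φ) y = _ := congrArg (fun L : SpT →L[ℝ] ℝ => L a) h3
  rw [h5]
  simp only [osc, pd, Pi.add_apply, Pi.smul_apply, smul_eq_mul, h4,
    add_apply, smul_apply]
  ring

lemma pd_add {F G : SpT → ℝ} (hF : ContDiff ℝ (⊤ : ℕ∞) F) (hG : ContDiff ℝ (⊤ : ℕ∞) G)
    (a : SpT) : pd a (F + G) = pd a F + pd a G := by
  funext y
  simp only [pd]
  rw [fderiv_add (hF.differentiable (by simp)).differentiableAt
    (hG.differentiable (by simp)).differentiableAt]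
  rfl

lemma pd_smul {F : SpT → ℝ} (c : ℝ) (a : SpT) :
    pd a (c • F) = c • pd a F := by
  funext y
  simp only [pd]
  rw [fderiv_const_smul_field]
  rfl

lemma contDiff_smul_fun {F : SpT → ℝ} (c : ℝ) (hF : ContDiff ℝ (⊤ : ℕ∞) F) :
    ContDiff ℝ (⊤ : ℕ∞) (c • F) := contDiff_const.smul hF

lemma pd_pd_osc {N : ℝ} {ℓ : SpT →L[ℝ] ℝ} {θ : ℝ} {φ : SpT → ℝ} (hφ : IsTest φ) (a b : SpT)
    (y : SpT) :
    pd a (pd b (osc N ℓ θ φ)) y = osc N ℓ θ (pd a (pd b φ)) y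
      + N * (ℓ a * osc N ℓ (θ + Real.pi / 2) (pd b φ) y
      + ℓ b * osc N ℓ (θ + Real.pi / 2) (pd a φ) y)
      - N ^ 2 * (ℓ a * ℓ b) * osc N ℓ θ φ y := by
  rw [pd_osc hφ.1, pd_add (osc_isTest (hφ.pd b)).1 (contDiff_smul_fun _ (osc_isTest hφ).1), pd_smul,
    pd_osc (hφ.pd b).1, pd_osc hφ.1]
  have h4 : Real.cos (N * ℓ y + (θ + Real.pi / 2 + Real.pi / 2)) = -Real.cos (N * ℓ y + θ) := by
    rw [← Real.cos_add_pi]; congr 1; ring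
  simp only [Pi.add_apply, Pi.smul_apply, smul_eq_mul, osc, h4]
  ring

lemma osc_abs_le (N : ℝ) (ℓ : SpT →L[ℝ] ℝ) (θ : ℝ) (φ : SpT → ℝ) (y : SpT) :
    |osc N ℓ θ φ y| ≤ |φ y| := by
  unfold osc
  rw [abs_mul]
  exact mul_le_of_le_one_right (abs_nonneg _) (Real.abs_cos_le_one _)

lemma IsTest.bound {φ : SpT → ℝ} (hφ : IsTest φ) : ∃ C, 0 ≤ C ∧ ∀ y, |φ y| ≤ C := by
  obtain ⟨C, hC⟩ := hφ.2.exists_bound_of_continuous hφ.1.continuous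
  exact ⟨C, (norm_nonneg _).trans (hC 0), hC⟩

/-- The second derivatives of `-s N⁻² φ cos (N ℓ + θ)` are `s ℓ(a) ℓ(b) φ cos (N ℓ + θ)` up to an
error `O(1/N)`, uniformly in the point and the phase. -/
lemma osc_remainder {φ : SpT → ℝ} (hφ : IsTest φ) (ℓ : SpT →L[ℝ] ℝ) (s : ℝ) (a b : SpT) :
    ∃ K, 0 ≤ K ∧ ∀ N : ℝ, 1 ≤ N → ∀ θ y,
      |pd a (pd b ((-(s / N ^ 2)) • osc N ℓ θ φ)) y - s * (ℓ a * ℓ b) * osc N ℓ θ φ y| ≤ K / N := by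
  obtain ⟨C1, hC10, hC1⟩ := ((hφ.pd b).pd a).bound
  obtain ⟨C2, hC20, hC2⟩ := (hφ.pd b).bound
  obtain ⟨C3, hC30, hC3⟩ := (hφ.pd a).bound
  refine ⟨|s| * (C1 + (|ℓ a| * C2 + |ℓ b| * C3)), by positivity, fun N hN θ y => ?_⟩
  have hN0 : 0 < N := by linarith
  rw [pd_smul, pd_smul, Pi.smul_apply, smul_eq_mul, pd_pd_osc hφ]
  have h1 := (osc_abs_le N ℓ θ (pd a (pd b φ)) y).trans (hC1 y)
  have h2 := (osc_abs_le N ℓ (θ + Real.pi / 2) (pd b φ) y).trans (hC2 y)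
  have h3 := (osc_abs_le N ℓ (θ + Real.pi / 2) (pd a φ) y).trans (hC3 y)
  set A := osc N ℓ θ (pd a (pd b φ)) y
  set B := osc N ℓ (θ + Real.pi / 2) (pd b φ) y
  set D := osc N ℓ (θ + Real.pi / 2) (pd a φ) y
  have e : -(s / N ^ 2) * (A + N * (ℓ a * B + ℓ b * D) - N ^ 2 * (ℓ a * ℓ b) * osc N ℓ θ φ y)
      - s * (ℓ a * ℓ b) * osc N ℓ θ φ y = -(s * (A / N + (ℓ a * B + ℓ b * D))) / N := by
    field_simp
    ring
  rw [e, abs_div, abs_neg, abs_mul, abs_of_pos hN0]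
  gcongr
  have h5 : |A / N| ≤ C1 := by
    rw [abs_div, abs_of_pos hN0]
    exact (div_le_self (abs_nonneg _) hN).trans h1
  refine (abs_add_le _ _).trans (add_le_add h5 ((abs_add_le _ _).trans ?_))
  rw [abs_mul, abs_mul]
  gcongr

section Wave
variable {E : Type*} [NormedAddCommGroup E] [InnerProductSpace ℝ E]

/-- The field `∑ⱼₖ ∂ⱼ∂ₖF Cⱼₖ` generated by the scalar potential `F`. -/
def potField (C : Fin 3 → Fin 3 → E) (F : SpT → ℝ) : SpT → E :=
  fun y => ∑ j, ∑ k, pd (eY j) (pd (eY k) F) y • C j k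

lemma potField_continuous (C : Fin 3 → Fin 3 → E) {F : SpT → ℝ} (hF : IsTest F) :
    Continuous (potField C F) := by
  unfold potField
  refine continuous_finsetSum _ fun j _ => continuous_finsetSum _ fun k _ => ?_
  exact ((hF.pd _).pd _).1.continuous.smul continuous_const

lemma integral_potField [FiniteDimensional ℝ E] (C : Fin 3 → Fin 3 → E) {F : SpT → ℝ} (hF : IsTest F) :
    ∫ y, potField C F y = 0 := by
  unfold potField
  have hi : ∀ j k, Integrable (fun y => pd (eY j) (pd (eY k) F) y • C j k) := fun j k =>
    (((hF.pd _).pd _).1.continuous.integrable_of_hasCompactSupport ((hF.pd _).pd _).2).smul_const _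
  rw [integral_finsetSum _ fun j _ => integrable_finsetSum _ fun k _ => hi j k]
  refine Finset.sum_eq_zero fun j _ => ?_
  rw [integral_finsetSum _ fun k _ => hi j k]
  refine Finset.sum_eq_zero fun k _ => ?_
  rw [integral_smul_const, integral_pd (hF.pd _), zero_smul]

lemma pd_eq_zero_of_notMem {F : SpT → ℝ} {a y : SpT} (hy : y ∉ tsupport F) : pd a F y = 0 := by
  have : fderiv ℝ F y = 0 := by
    by_contra h
    exact hy (support_fderiv_subset ℝ h)
  simp [pd, this]

lemma tsupport_pd (F : SpT → ℝ) (a : SpT) : tsupport (pd a F) ⊆ tsupport F :=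
  closure_minimal (fun y hy => by
    by_contra h
    exact hy (pd_eq_zero_of_notMem h)) (isClosed_tsupport F)

/-- If the potential operator `C` produces solutions of the linear system and its symbol at the
covector `ℓ` is `d`, then every ball supports a solution whose values are `ρ`-close to the segment
`[-s d, s d]`, with mean zero and with squared `L²` norm bounded below. The constant `32` comes from
three factors `2⁻³`, `2⁻¹`, `2⁻¹`: the cutoff equals `1` on the ball of half radius, one of the two
phases `0`, `π/2` carries half of the mass, and `(u - ρ)² ≥ u²/2 - ρ²`. -/
lemma exists_wave [FiniteDimensional ℝ E] {G : Set (SpT → E)} {d : E} {C : Fin 3 → Fin 3 → E} {ℓ : SpT →L[ℝ] ℝ}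
    (hCd : ∑ j, ∑ k, (ℓ (eY j) * ℓ (eY k)) • C j k = d)
    (hCG : ∀ F, IsTest F → ∀ g ∈ G, ∫ y, inner ℝ (potField C F y) (g y) = 0)
    (s : ℝ) {ρ : ℝ} (hρ : 0 < ρ) (a : SpT) {r : ℝ} (hr : 0 < r) :
    ∃ W : SpT → E, Continuous W ∧ (∀ y, y ∉ Metric.closedBall a r → W y = 0) ∧
      (∀ y, ∃ τ : ℝ, |τ| ≤ 1 ∧ ‖W y - (s * τ) • d‖ ≤ ρ) ∧ ∫ y, W y = 0 ∧
      (∀ g ∈ G, ∫ y, inner ℝ (W y) (g y) = 0) ∧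
      (s ^ 2 * ‖d‖ ^ 2 / 32 - ρ ^ 2) * volume.real (Metric.closedBall a r) ≤ ∫ y, ‖W y‖ ^ 2 := by
  let f : ContDiffBump a := ⟨r / 2, r, by positivity, by linarith⟩
  have hf : IsTest f := ⟨f.contDiff, f.hasCompactSupport⟩
  have hfs : tsupport f = Metric.closedBall a r := f.tsupport_eq
  choose K hK0 hK using fun j k => osc_remainder hf ℓ s (eY j) (eY k)
  set KC : ℝ := ∑ j, ∑ k, K j k * ‖C j k‖ with hKC
  have hKC0 : 0 ≤ KC := Finset.sum_nonneg fun j _ => Finset.sum_nonneg fun k _ =>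
    mul_nonneg (hK0 j k) (norm_nonneg _)
  set N : ℝ := 1 + KC / ρ with hN
  have hN1 : 1 ≤ N := by
    have : 0 ≤ KC / ρ := by positivity
    linarith
  have hN0 : 0 < N := by linarith
  have hNρ : KC / N ≤ ρ := by
    rw [div_le_iff₀ hN0, hN]
    have : ρ * (1 + KC / ρ) = ρ + KC := by field_simp
    linarith
  set F : ℝ → SpT → ℝ := fun θ => (-(s / N ^ 2)) • osc N ℓ θ f with hF
  have hFt : ∀ θ, IsTest (F θ) := fun θ =>
    ⟨contDiff_smul_fun _ (osc_isTest hf).1, (osc_isTest hf).2.smul_left (f := fun _ => (-(s / N ^ 2)))⟩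
  have hFs : ∀ θ, tsupport (F θ) ⊆ Metric.closedBall a r := by
    intro θ
    rw [← hfs]
    refine closure_mono fun y hy => ?_
    rw [Function.mem_support] at hy ⊢
    exact fun h => hy (by simp [hF, osc, h])
  have hrem : ∀ θ y, ‖potField C (F θ) y - (s * osc N ℓ θ f y) • d‖ ≤ ρ := by
    intro θ y
    refine le_trans ?_ hNρ
    have : potField C (F θ) y - (s * osc N ℓ θ f y) • d = ∑ j, ∑ k,
        (pd (eY j) (pd (eY k) (F θ)) y - s * (ℓ (eY j) * ℓ (eY k)) * osc N ℓ θ f y) • C j k := by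
      rw [← hCd]
      simp only [potField, Finset.smul_sum, ← Finset.sum_sub_distrib, smul_smul, sub_smul]
      refine Finset.sum_congr rfl fun j _ => Finset.sum_congr rfl fun k _ => ?_
      congr 2
      ring
    rw [this, hKC, Finset.sum_div]
    refine (norm_sum_le _ _).trans (Finset.sum_le_sum fun j _ => ?_)
    rw [Finset.sum_div]
    refine (norm_sum_le _ _).trans (Finset.sum_le_sum fun k _ => ?_)
    rw [norm_smul, Real.norm_eq_abs, mul_div_right_comm]
    exact mul_le_mul_of_nonneg_right (hK j k N hN1 θ y) (norm_nonneg _)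
  have hzero : ∀ θ y, y ∉ Metric.closedBall a r → potField C (F θ) y = 0 := by
    intro θ y hy
    refine Finset.sum_eq_zero fun j _ => Finset.sum_eq_zero fun k _ => ?_
    rw [pd_eq_zero_of_notMem (fun h => hy (hFs θ (tsupport_pd _ _ h))), zero_smul]
  have hB : volume (Metric.closedBall a r) ≠ ⊤ := Metric.isBounded_closedBall.measure_lt_top.ne
  have hoi : ∀ θ, Integrable (fun y => osc N ℓ θ f y ^ 2) := fun θ => by
    simp only [pow_two]
    exact (osc_isTest hf).integrable_mul (osc_isTest hf).1.continuous
  -- the squared waves with phases `0` and `π / 2` add up to `f ^ 2`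
  obtain ⟨θ, hθ⟩ : ∃ θ, volume.real (Metric.closedBall a r) / 16 ≤ ∫ y, osc N ℓ θ f y ^ 2 := by
    have h1 : volume.real (Metric.closedBall a r) / 8
        ≤ (∫ y, osc N ℓ 0 f y ^ 2) + ∫ y, osc N ℓ (Real.pi / 2) f y ^ 2 := by
      rw [← integral_add (hoi _) (hoi _)]
      have h2 : ∀ y, osc N ℓ 0 f y ^ 2 + osc N ℓ (Real.pi / 2) f y ^ 2 = f y ^ 2 := by
        intro y
        simp only [osc, add_zero, Real.cos_add_pi_div_two]
        linear_combination (f y ^ 2) * Real.sin_sq_add_cos_sq (N * ℓ y)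
      simp_rw [h2]
      have hfi : Integrable (fun y => f y ^ 2) := by
        simp only [pow_two]
        exact hf.integrable_mul hf.1.continuous
      have h3 : volume.real (Metric.closedBall a (r / 2)) ≤ ∫ y, f y ^ 2 := by
        have h4 : ∫ y in Metric.closedBall a (r / 2), f y ^ 2
            = volume.real (Metric.closedBall a (r / 2)) := by
          rw [setIntegral_congr_fun (g := fun _ => (1 : ℝ)) measurableSet_closedBall]
          · simp
          · intro y hy
            simp [f.one_of_mem_closedBall hy]
        rw [← h4]
        exact setIntegral_le_integral hfi (Eventually.of_forall fun y => sq_nonneg _)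
      have h5 : volume.real (Metric.closedBall a (r / 2))
          = volume.real (Metric.closedBall a r) / 8 := by
        rw [Measure.addHaar_real_closedBall' _ _ (by positivity),
          Measure.addHaar_real_closedBall' _ _ hr.le]
        have : Module.finrank ℝ SpT = 3 := by simp [SpT]
        rw [this]; ring
      rw [← h5]; exact h3
    by_contra hcon
    push Not at hcon
    have := hcon 0
    have := hcon (Real.pi / 2)
    linarith
  refine ⟨potField C (F θ), potField_continuous C (hFt θ), hzero θ, ?_, integral_potField C (hFt θ),
    hCG _ (hFt θ), ?_⟩
  · intro y
    refine ⟨osc N ℓ θ f y, (osc_abs_le _ _ _ _ _).trans ?_, hrem θ y⟩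
    rw [abs_of_nonneg f.nonneg]
    exact f.le_one
  · have hWi : Integrable (fun y => ‖potField C (F θ) y‖ ^ 2) :=
      ((potField_continuous C (hFt θ)).norm.pow 2).integrable_of_hasCompactSupport
        (HasCompactSupport.intro (isCompact_closedBall a r) fun y hy => by simp [hzero θ y hy])
    have h1 : ∫ y in Metric.closedBall a r,
        (s ^ 2 * ‖d‖ ^ 2 / 2 * osc N ℓ θ f y ^ 2 - ρ ^ 2) ≤ ∫ y, ‖potField C (F θ) y‖ ^ 2 := by
      refine le_trans ?_ (setIntegral_le_integral
        (s := Metric.closedBall a r) hWi (Eventually.of_forall fun y => sq_nonneg _))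
      refine setIntegral_mono (((hoi θ).const_mul _).integrableOn.sub (integrableOn_const hB))
        hWi.integrableOn fun y => ?_
      have h2 := hrem θ y
      have h3 : ‖(s * osc N ℓ θ f y) • d‖ ≤ ‖potField C (F θ) y‖ + ρ := by
        have := norm_sub_norm_le ((s * osc N ℓ θ f y) • d) (potField C (F θ) y)
        rw [norm_sub_rev] at this
        linarith
      have h4 : ‖(s * osc N ℓ θ f y) • d‖ ^ 2 = s ^ 2 * ‖d‖ ^ 2 * osc N ℓ θ f y ^ 2 := by
        rw [norm_smul, mul_pow, Real.norm_eq_abs, sq_abs]; ring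
      have h5 := pow_le_pow_left₀ (norm_nonneg _) h3 2
      rw [h4] at h5
      show s ^ 2 * ‖d‖ ^ 2 / 2 * osc N ℓ θ f y ^ 2 - ρ ^ 2 ≤ ‖potField C (F θ) y‖ ^ 2
      nlinarith [sq_nonneg (‖potField C (F θ) y‖ - ρ)]
    refine le_trans ?_ h1
    rw [integral_sub ((hoi θ).const_mul _).integrableOn (integrableOn_const hB),
      setIntegral_const, smul_eq_mul, integral_const_mul,
      setIntegral_eq_integral_of_forall_compl_eq_zero]
    · have := mul_le_mul_of_nonneg_left hθ (show 0 ≤ s ^ 2 * ‖d‖ ^ 2 / 2 by positivity)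
      linarith
    · intro y hy
      have : f y = 0 := by
        rw [← hfs] at hy
        exact image_eq_zero_of_notMem_tsupport hy
      simp [osc, this]

end Wave

/-! ### The linear system and its plane waves -/

/-- States `(v₁, v₂, w₁₁, w₁₂, w₂₂, m₁, m₂, b)`, where `w` stands for `v ⊗ v + p I` and `m` for
`b v`. -/
abbrev St := EuclideanSpace ℝ (Fin 8)

/-- The four space-time fields `(w₁₁, w₁₂, v₁)`, `(w₁₂, w₂₂, v₂)`, `(v₁, v₂, 0)`, `(m₁, m₂, b)`, which
the linear system requires to be divergence free: the `l`-th component of the `r`-th field of a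
state `z` is `⟪z, divRow r l⟫`. -/
def divRow : Fin 4 → Fin 3 → St :=
  ![![EuclideanSpace.single 2 1, EuclideanSpace.single 3 1, EuclideanSpace.single 0 1],
    ![EuclideanSpace.single 3 1, EuclideanSpace.single 4 1, EuclideanSpace.single 1 1],
    ![EuclideanSpace.single 0 1, EuclideanSpace.single 1 1, 0],
    ![EuclideanSpace.single 5 1, EuclideanSpace.single 6 1, EuclideanSpace.single 7 1]]

/-- The field against which a state is integrated when its `r`-th divergence-free row is tested
with `ψ r`. -/
def testField (ψ : Fin 4 → SpT → ℝ) : SpT → St :=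
  fun y => ∑ r, ∑ l, pd (eY l) (ψ r) y • divRow r l

/-- Orthogonality to all these fields is the weak form of the linear system. -/
def testFields : Set (SpT → St) :=
  {g | ∃ ψ : Fin 4 → SpT → ℝ, (∀ r, IsTest (ψ r)) ∧ g = testField ψ}

lemma testFields_continuous {g : SpT → St} (hg : g ∈ testFields) : Continuous g := by
  obtain ⟨ψ, hψ, rfl⟩ := hg
  refine continuous_finsetSum _ fun r _ => continuous_finsetSum _ fun l _ => ?_
  exact ((hψ r).pd _).1.continuous.smul continuous_const

lemma testFields_hasCompactSupport {g : SpT → St} (hg : g ∈ testFields) : HasCompactSupport g := by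
  obtain ⟨ψ, hψ, rfl⟩ := hg
  refine HasCompactSupport.intro
    (isCompact_iUnion fun r => (hψ r).2) fun y hy => ?_
  simp only [Set.mem_iUnion, not_exists] at hy
  exact Finset.sum_eq_zero fun r _ => Finset.sum_eq_zero fun l _ => by
    rw [pd_eq_zero_of_notMem (hy r), zero_smul]

/-- A second order potential operator for the linear system. With `α ζ = ζ × x`, its symbol at `ζ` is
`v = (-α₃ ζ₂, α₃ ζ₁) / 2`, `w₁₁ = -α₁ ζ₂`, `w₁₂ = (α₁ ζ₁ - α₂ ζ₂) / 2`, `w₂₂ = α₂ ζ₁` and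
`(m, b) = (n · ζ) (ζ × y)`. The rows are orthogonal to `ζ` because `α ζ · ζ = 0`. -/
def waveC (x y n : Fin 3 → ℝ) (j k : Fin 3) : St :=
  let α : Fin 3 → Fin 3 → ℝ := fun p => ![![0, x 2, -x 1], ![-x 2, 0, x 0], ![x 1, -x 0, 0]] p
  let γ : Fin 3 → Fin 3 → ℝ := fun p => ![![0, y 2, -y 1], ![-y 2, 0, y 0], ![y 1, -y 0, 0]] p
  let e : Fin 3 → Fin 3 → ℝ := fun p q => if p = q then 1 else 0
  !₂[-(α 2 j * e 1 k) / 2, α 2 j * e 0 k / 2, -(α 0 j * e 1 k),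
    (α 0 j * e 0 k - α 1 j * e 1 k) / 2, α 1 j * e 0 k,
    n j * γ 0 k, n j * γ 1 k, n j * γ 2 k]

/-- The algebraic form of the linear system for `waveC`: the symbol of each row is orthogonal to `ζ`,
with the symmetric array `t` in the role of `ζ ⊗ ζ ⊗ ζ`. -/
lemma waveC_symm {x y n : Fin 3 → ℝ} {t : Fin 3 → Fin 3 → Fin 3 → ℝ}
    (h1 : ∀ j k l, t j k l = t k j l) (h2 : ∀ j k l, t j k l = t j l k) (r : Fin 4) :
    ∑ l, ∑ j, ∑ k, t j k l * inner ℝ (waveC x y n j k) (divRow r l) = 0 := by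
  have a1 := h1 1 0; have a2 := h1 2 0; have a3 := h1 2 1
  have b1 := fun j => h2 j 1 0; have b2 := fun j => h2 j 2 0; have b3 := fun j => h2 j 2 1
  fin_cases r <;>
  · simp [Fin.sum_univ_three, divRow, waveC, EuclideanSpace.inner_single_right]
    simp only [a1, a2, a3, b1, b2, b3]
    ring

lemma waveC_weak (x y n : Fin 3 → ℝ) {F : SpT → ℝ} (hF : IsTest F) {g : SpT → St}
    (hg : g ∈ testFields) : ∫ z, inner ℝ (potField (waveC x y n) F z) (g z) = 0 := by
  obtain ⟨ψ, hψ, rfl⟩ := hg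
  have hi : ∀ r l j k, Integrable (fun z => pd (eY j) (pd (eY k) F) z * pd (eY l) (ψ r) z *
      inner ℝ (waveC x y n j k) (divRow r l)) := fun r l j k =>
    (((hF.pd _).pd _).integrable_mul ((hψ r).pd _).1.continuous).mul_const _
  have h1 : ∀ z, inner ℝ (potField (waveC x y n) F z) (testField ψ z) =
      ∑ r, ∑ l, ∑ j, ∑ k, pd (eY j) (pd (eY k) F) z * pd (eY l) (ψ r) z *
        inner ℝ (waveC x y n j k) (divRow r l) := by
    intro z
    simp only [potField, testField, inner_sum, sum_inner, real_inner_smul_left,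
      real_inner_smul_right]
    refine Finset.sum_congr rfl fun r _ => Finset.sum_congr rfl fun l _ =>
      Finset.sum_congr rfl fun j _ => Finset.sum_congr rfl fun k _ => ?_
    ring
  simp_rw [h1]
  rw [integral_finsetSum _ fun r _ => integrable_finsetSum _ fun l _ =>
    integrable_finsetSum _ fun j _ => integrable_finsetSum _ fun k _ => hi r l j k]
  refine Finset.sum_eq_zero fun r _ => ?_
  rw [← waveC_symm (x := x) (y := y) (n := n) (t := triple F (ψ r))
    (triple_swap_left hF _) (triple_swap_right hF (hψ r)) r,
    integral_finsetSum _ fun l _ =>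
      integrable_finsetSum _ fun j _ => integrable_finsetSum _ fun k _ => hi r l j k]
  refine Finset.sum_congr rfl fun l _ => ?_
  rw [integral_finsetSum _ fun j _ => integrable_finsetSum _ fun k _ => hi r l j k]
  refine Finset.sum_congr rfl fun j _ => ?_
  rw [integral_finsetSum _ fun k _ => hi r l j k]
  refine Finset.sum_congr rfl fun k _ => ?_
  rw [integral_mul_const]
  rfl

/-- The state `(v, v ⊗ v - I / 2, c v, c)` with velocity `v = (a₁, a₂)` and tracer `c`. -/
def pureState (a₁ a₂ c : ℝ) : St :=
  !₂[a₁, a₂, a₁ ^ 2 - 1 / 2, a₁ * a₂, a₂ ^ 2 - 1 / 2, c * a₁, c * a₂, c]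

/-- Any two pure states with distinct velocities are connected by a plane wave. The frequency is
`η = (v, 1) × (v', 1)`: it is orthogonal to both `(v, 1)` and `(v', 1)`, hence to
`(v, 1) + (v', 1)` and to `c (v, 1) - c' (v', 1)`, which therefore have the form `η × x`. -/
lemma exists_potential (a₁ a₂ c a₁' a₂' c' : ℝ) (hne : a₁ ≠ a₁' ∨ a₂ ≠ a₂') :
    ∃ (C : Fin 3 → Fin 3 → St) (ℓ : SpT →L[ℝ] ℝ),
      ∑ j, ∑ k, (ℓ (eY j) * ℓ (eY k)) • C j k = pureState a₁ a₂ c - pureState a₁' a₂' c' ∧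
      ∀ F, IsTest F → ∀ g ∈ testFields, ∫ y, inner ℝ (potField C F y) (g y) = 0 := by
  set e₀ : ℝ := a₂ - a₂' with h0
  set e₁ : ℝ := -(a₁ - a₁') with h1
  set e₂ : ℝ := a₁ * a₂' - a₂ * a₁' with h2
  have hN : e₀ ^ 2 + e₁ ^ 2 + e₂ ^ 2 ≠ 0 := by
    intro h
    have h3 : e₀ = 0 := by nlinarith [sq_nonneg e₀, sq_nonneg e₁, sq_nonneg e₂]
    have h4 : e₁ = 0 := by nlinarith [sq_nonneg e₀, sq_nonneg e₁, sq_nonneg e₂]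
    rcases hne with h | h
    · exact h (by linarith)
    · exact h (by linarith)
  obtain ⟨κ, hκ⟩ : ∃ κ : ℝ, κ * (e₀ ^ 2 + e₁ ^ 2 + e₂ ^ 2) = 1 := ⟨_, inv_mul_cancel₀ hN⟩
  let ℓ : SpT →L[ℝ] ℝ :=
    e₀ • ((ContinuousLinearMap.proj 0).comp (ContinuousLinearMap.fst ℝ (Fin 2 → ℝ) ℝ))
    + e₁ • ((ContinuousLinearMap.proj 1).comp (ContinuousLinearMap.fst ℝ (Fin 2 → ℝ) ℝ))
    + e₂ • ContinuousLinearMap.snd ℝ (Fin 2 → ℝ) ℝ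
  have l0 : ℓ (eY 0) = e₀ := by simp [ℓ, eY]
  have l1 : ℓ (eY 1) = e₁ := by simp [ℓ, eY]
  have l2 : ℓ (eY 2) = e₂ := by simp [ℓ, eY]
  -- here `η = (e₀, e₁, e₂)`, and `cr P = κ (P × η)` inverts `x ↦ η × x` on the plane orthogonal to `η`
  let cr : (Fin 3 → ℝ) → Fin 3 → ℝ := fun P =>
    ![κ * (P 1 * e₂ - P 2 * e₁), κ * (P 2 * e₀ - P 0 * e₂), κ * (P 0 * e₁ - P 1 * e₀)]
  refine ⟨waveC (cr ![a₁ + a₁', a₂ + a₂', 2])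
    (cr ![c * a₁ - c' * a₁', c * a₂ - c' * a₂', c - c'])
    ![κ * e₀, κ * e₁, κ * e₂], ℓ, ?_, fun F hF g hg => waveC_weak _ _ _ hF hg⟩
  ext i
  fin_cases i <;> simp [Fin.sum_univ_three, l0, l1, l2, waveC, pureState, cr] <;>
    simp only [h0, h1, h2] at hκ ⊢
  · linear_combination (a₁ - a₁') * hκ
  · linear_combination (a₂ - a₂') * hκ
  · linear_combination (a₁ ^ 2 - a₁' ^ 2) * hκ
  · linear_combination (a₁ * a₂ - a₁' * a₂') * hκ
  · linear_combination (a₂ ^ 2 - a₂' ^ 2) * hκ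
  · linear_combination (c * a₁ - c' * a₁') *
      (κ * ((a₂ - a₂') ^ 2 + (-(a₁ - a₁')) ^ 2 + (a₁ * a₂' - a₂ * a₁') ^ 2) + 1) * hκ
  · linear_combination (c * a₂ - c' * a₂') *
      (κ * ((a₂ - a₂') ^ 2 + (-(a₁ - a₁')) ^ 2 + (a₁ * a₂' - a₂ * a₁') ^ 2) + 1) * hκ
  · linear_combination (c - c') *
      (κ * ((a₂ - a₂') ^ 2 + (-(a₁ - a₁')) ^ 2 + (a₁ * a₂' - a₂ * a₁') ^ 2) + 1) * hκ

/-! ### Eight vertices and their barycentric coordinates -/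

/-- First velocity component of the eight vertices: velocities `±(1, 0)`, `±(0, 1)` with tracer `1`,
and `±(3, 4) / 5`, `±(4, -3) / 5` with tracer `-1`. -/
def vx : Fin 8 → ℝ := ![1, -1, 0, 0, 3 / 5, -3 / 5, 4 / 5, -4 / 5]

/-- Second velocity component of the eight vertices. -/
def vy : Fin 8 → ℝ := ![0, 0, 1, -1, 4 / 5, -4 / 5, -3 / 5, 3 / 5]

/-- Tracer value of the eight vertices. -/
def bb : Fin 8 → ℝ := ![1, 1, 1, 1, -1, -1, -1, -1]

/-- The eight vertices in state space. -/
def vert (i : Fin 8) : St := pureState (vx i) (vy i) (bb i)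

/-- Coefficients of `w₁₁ - w₂₂` in four times the barycentric coordinates. -/
def lamA : Fin 8 → ℝ := ![1, 1, -1, -1, 0, 0, 0, 0]

/-- Coefficients of `w₁₂` in four times the barycentric coordinates. -/
def lamB : Fin 8 → ℝ :=
  ![7 / 12, 7 / 12, -(7 / 12), -(7 / 12), 25 / 12, 25 / 12, -(25 / 12), -(25 / 12)]

/-- Linear part of the `i`-th barycentric coordinate. -/
def lamLin (i : Fin 8) (z : St) : ℝ :=
  bb i * z 7 / 8 + (vx i * z 0 + vy i * z 1 + bb i * (vx i * z 5 + vy i * z 6)) / 4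
    + (lamA i * (z 2 - z 4) + lamB i * z 3) / 4

/-- The `i`-th barycentric coordinate with respect to the eight vertices, extended to all states so
as not to depend on the trace of `w`. -/
def lam (i : Fin 8) (z : St) : ℝ := 1 / 8 + lamLin i z

lemma lamLin_add (i : Fin 8) (z w : St) : lamLin i (z + w) = lamLin i z + lamLin i w := by
  simp only [lamLin, PiLp.add_apply]; ring

lemma lamLin_smul (i : Fin 8) (c : ℝ) (z : St) : lamLin i (c • z) = c * lamLin i z := by
  simp only [lamLin, PiLp.smul_apply, smul_eq_mul]; ring

lemma lam_add (i : Fin 8) (z w : St) : lam i (z + w) = lam i z + lamLin i w := by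
  rw [lam, lamLin_add, lam, add_assoc]

lemma lam_continuous (i : Fin 8) : Continuous (lam i) := by
  unfold lam lamLin; fun_prop

lemma lam_vert (l i : Fin 8) : lam l (vert i) = if l = i then 1 else 0 := by
  have e : lam l (vert i) = 1 / 8 + (bb l * bb i / 8
      + (vx l * vx i + vy l * vy i + bb l * (vx l * (bb i * vx i) + vy l * (bb i * vy i))) / 4
      + (lamA l * (vx i ^ 2 - 1 / 2 - (vy i ^ 2 - 1 / 2)) + lamB l * (vx i * vy i)) / 4) := rfl
  rw [e]
  fin_cases l <;> fin_cases i <;> simp [vx, vy, bb, lamA, lamB] <;> norm_num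

lemma lamLin_vert_sub (l i j : Fin 8) :
    lamLin l (vert i - vert j) = (if l = i then 1 else 0) - if l = j then 1 else 0 := by
  have h := lam_add l (vert j) (vert i - vert j)
  rw [add_sub_cancel, lam_vert, lam_vert] at h
  linarith

lemma abs_coord_le (z : St) (i : Fin 8) : |z i| ≤ ‖z‖ := PiLp.norm_apply_le z i

lemma abs_lamLin_le (i : Fin 8) (z : St) : |lamLin i z| ≤ 4 * ‖z‖ := by
  have h := fun c => abs_le.1 (abs_coord_le z c)
  have h0 := h 0; have h1 := h 1; have h2 := h 2; have h3 := h 3; have h4 := h 4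
  have h5 := h 5; have h6 := h 6; have h7 := h 7
  have hn := norm_nonneg z
  rw [abs_le]
  fin_cases i <;> simp [lamLin, lamA, lamB, vx, vy, bb] <;> constructor <;> linarith

lemma sum_lam (z : St) : ∑ i, lam i z = 1 := by
  simp [Fin.sum_univ_eight, lam, lamLin, lamA, lamB, vx, vy, bb]; ring

/-- A state is, up to the trace of `w`, the barycentric combination of the vertices. -/
lemma reconstruct (z : St) :
    z 0 = ∑ i, lam i z * vx i ∧ z 1 = ∑ i, lam i z * vy i ∧ z 3 = ∑ i, lam i z * (vx i * vy i) ∧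
    z 2 - z 4 = ∑ i, lam i z * (vx i ^ 2 - vy i ^ 2) ∧ z 5 = ∑ i, lam i z * (bb i * vx i) ∧
    z 6 = ∑ i, lam i z * (bb i * vy i) ∧ z 7 = ∑ i, lam i z * bb i := by
  refine ⟨?_, ?_, ?_, ?_, ?_, ?_, ?_⟩ <;>
  · simp [Fin.sum_univ_eight, lam, lamLin, lamA, lamB, vx, vy, bb]; ring

/-- The set of subsolution states: the open simplex spanned by the vertices, thickened in the
direction of the trace of `w`, which is left free for the pressure. -/
def subSet : Set St := {z | (∀ i, 0 < lam i z) ∧ |z 2 + z 4| < 1}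

lemma zero_mem_subSet : (0 : St) ∈ subSet := by
  refine ⟨fun i => ?_, by simp⟩
  simp [lam, lamLin]

lemma norm_le_of_mem {z : St} (hz : z ∈ subSet) : ‖z‖ ≤ 6 := by
  obtain ⟨h, ht⟩ := hz
  have hc : ∀ i, z i ^ 2 ≤ 4 := by
    have h0 := h 0; have h1 := h 1; have h2 := h 2; have h3 := h 3; have h4 := h 4
    have h5 := h 5; have h6 := h 6; have h7 := h 7
    simp [lam, lamLin, lamA, lamB, vx, vy, bb] at h0 h1 h2 h3 h4 h5 h6 h7
    rw [abs_lt] at ht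
    intro i
    suffices -2 ≤ z i ∧ z i ≤ 2 by nlinarith
    fin_cases i <;> simp <;> constructor <;> linarith
  rw [EuclideanSpace.norm_eq, Real.sqrt_le_left (by norm_num)]
  simp only [Real.norm_eq_abs, sq_abs]
  calc ∑ i, z i ^ 2 ≤ ∑ i : Fin 8, (4 : ℝ) := Finset.sum_le_sum fun i _ => hc i
    _ ≤ 6 ^ 2 := by norm_num

/-- The gain function: a continuous function which, on the closure of `subSet`, vanishes only where
a single barycentric coordinate is nonzero. The factor `1 / 16384` makes it at most `m² / 256`,
with `m` the second largest coordinate, since there are at most `64` pairs. -/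
def defect (z : St) : ℝ :=
  1 / 16384 * ∑ i, ∑ j, if i = j then 0 else (min (max (lam i z) 0) (max (lam j z) 0)) ^ 2

lemma defect_continuous : Continuous defect := by
  have := lam_continuous
  unfold defect
  refine continuous_const.mul
    (continuous_finsetSum _ fun i _ => continuous_finsetSum _ fun j _ => ?_)
  split_ifs
  · exact continuous_const
  · fun_prop

lemma defect_nonneg (z : St) : 0 ≤ defect z := by
  unfold defect
  refine mul_nonneg (by norm_num) (Finset.sum_nonneg fun i _ => Finset.sum_nonneg fun j _ => ?_)
  split_ifs <;> positivity

lemma defect_le {z : St} {m : ℝ} (h : ∀ i j, i ≠ j → min (max (lam i z) 0) (max (lam j z) 0) ≤ m) :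
    defect z ≤ m ^ 2 / 256 := by
  have : ∑ i, ∑ j, (if i = j then 0 else (min (max (lam i z) 0) (max (lam j z) 0)) ^ 2)
      ≤ ∑ i : Fin 8, ∑ j : Fin 8, m ^ 2 := by
    refine Finset.sum_le_sum fun i _ => Finset.sum_le_sum fun j _ => ?_
    split_ifs with hij
    · positivity
    · exact pow_le_pow_left₀ (by positivity) (h i j hij) 2
  unfold defect
  simp at this
  linarith

lemma lam_le_one {z : St} (h : ∀ i, 0 ≤ lam i z) (i : Fin 8) : lam i z ≤ 1 := by
  rw [← sum_lam z]
  exact Finset.single_le_sum (fun j _ => h j) (Finset.mem_univ i)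

lemma defect_le_one {z : St} (hz : z ∈ subSet) : defect z ≤ 1 := by
  refine (defect_le (m := 1) fun i j _ => ?_).trans (by norm_num)
  refine (min_le_left _ _).trans (max_le (lam_le_one (fun i => (hz.1 i).le) i) zero_le_one)

/-- Where the gain function vanishes, the state is a vertex up to the trace of `w`. -/
lemma exists_of_defect_eq_zero {z : St} (hz : z ∈ closure subSet) (h0 : defect z = 0) :
    ∃ i, z 0 = vx i ∧ z 1 = vy i ∧ z 3 = vx i * vy i ∧ z 2 - z 4 = vx i ^ 2 - vy i ^ 2 ∧
      z 5 = bb i * vx i ∧ z 6 = bb i * vy i ∧ z 7 = bb i := by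
  have hnn : ∀ i, 0 ≤ lam i z := by
    intro i
    have hc : IsClosed {w : St | 0 ≤ lam i w} := isClosed_le continuous_const (lam_continuous i)
    exact closure_minimal (fun w hw => (hw.1 i).le) hc hz
  have hmin : ∀ i j, i ≠ j → min (lam i z) (lam j z) = 0 := by
    have hterm : ∀ i j, 0 ≤ (if i = j then 0 else
        (min (max (lam i z) 0) (max (lam j z) 0)) ^ 2) := fun i j => by
      split_ifs <;> positivity
    have h1 : ∑ i, ∑ j, (if i = j then 0 else
        (min (max (lam i z) 0) (max (lam j z) 0)) ^ 2) = 0 := by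
      unfold defect at h0; linarith
    intro i j hij
    have h2 := (Finset.sum_eq_zero_iff_of_nonneg fun i _ =>
      Finset.sum_nonneg fun j _ => hterm i j).1 h1 i (Finset.mem_univ i)
    have h3 := (Finset.sum_eq_zero_iff_of_nonneg fun j _ => hterm i j).1 h2 j (Finset.mem_univ j)
    rw [if_neg hij, max_eq_left (hnn i), max_eq_left (hnn j)] at h3
    exact pow_eq_zero_iff (two_ne_zero) |>.1 h3
  obtain ⟨i, hi⟩ : ∃ i, 0 < lam i z := by
    by_contra hcon
    push Not at hcon
    have := Finset.sum_nonpos fun i (_ : i ∈ Finset.univ) => hcon i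
    rw [sum_lam] at this
    linarith
  have hz0 : ∀ j, j ≠ i → lam j z = 0 := by
    intro j hj
    rcases min_choice (lam i z) (lam j z) with h | h
    · have := hmin i j hj.symm
      linarith
    · rw [← h]; exact hmin i j hj.symm
  have hsum : ∀ f : Fin 8 → ℝ, ∑ l, lam l z * f l = lam i z * f i := fun f =>
    Finset.sum_eq_single i (fun j _ hj => by rw [hz0 j hj, zero_mul]) (by simp)
  have hi1 : lam i z = 1 := by
    have := hsum 1
    simpa [sum_lam] using this.symm
  have := reconstruct z
  simp only [hsum, hi1, one_mul] at this
  exact ⟨i, this⟩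

lemma vert_unit (i : Fin 8) : vx i ^ 2 + vy i ^ 2 = 1 ∧ |bb i| = 1 := by
  fin_cases i <;> norm_num [vx, vy, bb]

lemma vert_ne {i j : Fin 8} (h : i ≠ j) : vx i ≠ vx j ∨ vy i ≠ vy j := by
  revert h
  fin_cases i <;> fin_cases j <;> norm_num [vx, vy]

lemma one_le_norm_vert_sub {i j : Fin 8} (h : i ≠ j) : 1 ≤ ‖vert i - vert j‖ ^ 2 := by
  have h1 : (vx i - vx j) ^ 2 + (vy i - vy j) ^ 2 + (bb i - bb j) ^ 2 ≤ ‖vert i - vert j‖ ^ 2 := by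
    rw [EuclideanSpace.norm_sq_eq, Fin.sum_univ_eight]
    simp [vert, pureState]
    nlinarith [sq_nonneg (vx i ^ 2 - vx j ^ 2), sq_nonneg (vx i * vy i - vx j * vy j),
      sq_nonneg (vy i ^ 2 - vy j ^ 2), sq_nonneg (bb i * vx i - bb j * vx j),
      sq_nonneg (bb i * vy i - bb j * vy j)]
  refine le_trans ?_ h1
  revert h
  clear h1
  fin_cases i <;> fin_cases j <;> norm_num [vx, vy, bb]

/-! ### Local perturbations and the weak solution -/

lemma vert_trace (i j : Fin 8) : (vert i - vert j) 2 + (vert i - vert j) 4 = 0 := by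
  have e : (vert i - vert j) 2 + (vert i - vert j) 4 = (vx i ^ 2 - 1 / 2 - (vx j ^ 2 - 1 / 2))
    + (vy i ^ 2 - 1 / 2 - (vy j ^ 2 - 1 / 2)) := rfl
  rw [e]
  linarith [(vert_unit i).1, (vert_unit j).1]

/-- The perturbation at `ν` moves along the direction joining the two vertices with the largest
barycentric coordinates, by half the smaller one of these, which keeps all the coordinates
positive. -/
lemma hasLocalPert_subSet : HasLocalPert volume testFields subSet defect := by
  intro ν hν
  obtain ⟨hpos, htr⟩ := hν
  obtain ⟨⟨⟨i, j⟩, hij⟩, hmax⟩ :=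
    haveI : Nonempty {p : Fin 8 × Fin 8 // p.1 ≠ p.2} := ⟨⟨(0, 1), by decide⟩⟩
    Finite.exists_max (fun p : {p : Fin 8 × Fin 8 // p.1 ≠ p.2} =>
      min (lam p.1.1 ν) (lam p.1.2 ν))
  replace hij : i ≠ j := hij
  set m : ℝ := min (lam i ν) (lam j ν) with hm
  have hm0 : 0 < m := lt_min (hpos i) (hpos j)
  obtain ⟨l₀, hl₀⟩ := Finite.exists_min (fun l => lam l ν)
  set s : ℝ := m / 2 with hs
  have hs0 : 0 < s := by positivity
  set d : St := vert i - vert j with hd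
  have hd1 : 1 ≤ ‖d‖ ^ 2 := one_le_norm_vert_sub hij
  -- the segment `ν + s τ d`, `|τ| ≤ 1`, has distance at least `η` to the complement of `subSet`
  set η : ℝ := min (lam l₀ ν / 8) ((1 - |ν 2 + ν 4|) / 2) with hη
  have hη0 : 0 < η := lt_min (by have := hpos l₀; positivity) (by linarith)
  have hmem : ∀ τ : ℝ, |τ| ≤ 1 → ∀ w : St, ‖w‖ < η → ν + (s * τ) • d + w ∈ subSet := by
    intro τ hτ w hw
    refine ⟨fun l => ?_, ?_⟩
    · rw [lam_add, lam_add, lamLin_smul, lamLin_vert_sub]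
      have h1 := (abs_le.1 (abs_lamLin_le l w)).1
      have h2 : η ≤ lam l ν / 8 := (min_le_left _ _).trans (by have := hl₀ l; linarith)
      have h3 : lam l ν / 2 ≤ lam l ν +
          s * τ * ((if l = i then 1 else 0) - if l = j then 1 else 0) := by
        have h4 : |s * τ| ≤ s := by
          rw [abs_mul, abs_of_pos hs0]
          exact mul_le_of_le_one_right hs0.le hτ
        have h5 := abs_le.1 h4
        have hmi : m ≤ lam i ν := min_le_left _ _
        have hmj : m ≤ lam j ν := min_le_right _ _
        have hl := hpos l
        split_ifs with h6 h7 h7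
        · exact absurd (h6.symm.trans h7) hij
        · subst h6; linarith
        · subst h7; linarith
        · linarith
      linarith
    · have e : (ν + (s * τ) • d + w) 2 + (ν + (s * τ) • d + w) 4
          = (ν 2 + ν 4) + s * τ * (d 2 + d 4) + (w 2 + w 4) := by
        simp only [PiLp.add_apply, PiLp.smul_apply, smul_eq_mul]; ring
      rw [e, hd, vert_trace, mul_zero, add_zero]
      have h1 := abs_coord_le w 2
      have h2 := abs_coord_le w 4
      have h3 : η ≤ (1 - |ν 2 + ν 4|) / 2 := min_le_right _ _
      have h4 := abs_add_le (ν 2 + ν 4) (w 2 + w 4)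
      have h5 := abs_add_le (w 2) (w 4)
      linarith
  obtain ⟨C, ℓ, hCd, hCG⟩ := exists_potential (vx i) (vy i) (bb i) (vx j) (vy j) (bb j) (vert_ne hij)
  refine ⟨η / 2, by positivity, fun a r hr => ?_⟩
  set ρ : ℝ := min (η / 2) (s / 8) with hρ
  have hρ0 : 0 < ρ := by positivity
  obtain ⟨W, hWc, hWs, hWτ, hWi, hWG, hWn⟩ := exists_wave hCd hCG s hρ0 a hr
  refine ⟨W, hWc, hWs, fun y e he => ?_, hWi, hWG, le_trans ?_ hWn⟩
  · obtain ⟨τ, hτ, hW⟩ := hWτ y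
    have e1 : ν + W y + e = ν + (s * τ) • d + ((W y - (s * τ) • d) + e) := by abel
    rw [e1]
    refine hmem τ hτ _ ((norm_add_le _ _).trans_lt ?_)
    have : ρ ≤ η / 2 := min_le_left _ _
    have hW' : ‖W y - (s * τ) • d‖ ≤ ρ := hW
    linarith
  · refine mul_le_mul_of_nonneg_right ?_ measureReal_nonneg
    have h1 : defect ν ≤ m ^ 2 / 256 := by
      refine defect_le fun p q hpq => ?_
      rw [max_eq_left (hpos p).le, max_eq_left (hpos q).le]
      exact hmax ⟨(p, q), hpq⟩
    have h2 : ρ ^ 2 ≤ (s / 8) ^ 2 := pow_le_pow_left₀ hρ0.le (min_le_right _ _) 2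
    have h3 : s ^ 2 ≤ s ^ 2 * ‖d‖ ^ 2 := le_mul_of_one_le_right (sq_nonneg _) hd1
    have h4 : m = 2 * s := by rw [hs]; ring
    rw [h4] at h1
    change defect ν ≤ s ^ 2 * ‖d‖ ^ 2 / 32 - ρ ^ 2
    nlinarith

lemma inner_testField (z : St) (ψ : Fin 4 → SpT → ℝ) (y : SpT) :
    inner ℝ z (testField ψ y) =
      (z 2 * pd (eY 0) (ψ 0) y + z 3 * pd (eY 1) (ψ 0) y + z 0 * pd (eY 2) (ψ 0) y)
      + (z 3 * pd (eY 0) (ψ 1) y + z 4 * pd (eY 1) (ψ 1) y + z 1 * pd (eY 2) (ψ 1) y)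
      + (z 0 * pd (eY 0) (ψ 2) y + z 1 * pd (eY 1) (ψ 2) y)
      + (z 5 * pd (eY 0) (ψ 3) y + z 6 * pd (eY 1) (ψ 3) y + z 7 * pd (eY 2) (ψ 3) y) := by
  simp only [testField, Fin.sum_univ_four, Fin.sum_univ_three, inner_add_right,
    real_inner_smul_right]
  simp [divRow, EuclideanSpace.inner_single_right]
  ring

lemma isTest_zero : IsTest 0 := ⟨contDiff_const, HasCompactSupport.zero⟩

lemma pd_zero (a y : SpT) : pd a 0 y = 0 := by simp [pd]

/-- For every bounded open set `Ω ⊂ ℝ² × ℝ` there exist bounded measurable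
functions `v : ℝ²×ℝ → ℝ²`, `b, p : ℝ²×ℝ → ℝ` which form a weak solution of the 2D
incompressible Euler equations with a passive tracer, with `|v| = 1 = |b|` a.e. on `Ω` and
`v = 0`, `b = 0`, `p = 0` a.e. outside `Ω`. -/
theorem stmt_0 (Ω : Set ((Fin 2 → ℝ) × ℝ)) (hΩopen : IsOpen Ω)
    (hΩbdd : Bornology.IsBounded Ω) :
    ∃ (v : (Fin 2 → ℝ) × ℝ → Fin 2 → ℝ) (b p : (Fin 2 → ℝ) × ℝ → ℝ),
      Measurable v ∧ Measurable b ∧ Measurable p ∧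
      (∃ C : ℝ, ∀ y, ‖v y‖ ≤ C ∧ |b y| ≤ C ∧ |p y| ≤ C) ∧
      -- (a) weak form of the momentum equation ∂ₜ v + div (v ⊗ v) + ∇p = 0
      (∀ Ψ : (Fin 2 → ℝ) × ℝ → Fin 2 → ℝ, ContDiff ℝ (⊤ : ℕ∞) Ψ → HasCompactSupport Ψ →
        ∫ y, ((∑ i, v y i * fderiv ℝ Ψ y ((0 : Fin 2 → ℝ), (1 : ℝ)) i)
            + (∑ i, ∑ j, v y i * v y j * fderiv ℝ Ψ y (Pi.single j 1, (0 : ℝ)) i)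
            + p y * ∑ j, fderiv ℝ Ψ y (Pi.single j 1, (0 : ℝ)) j) = 0) ∧
      -- (b) weak form of the tracer equation ∂ₜ b + div (b v) = 0 and of div v = 0
      (∀ φ : (Fin 2 → ℝ) × ℝ → ℝ, ContDiff ℝ (⊤ : ℕ∞) φ → HasCompactSupport φ →
        (∫ y, (b y * fderiv ℝ φ y ((0 : Fin 2 → ℝ), (1 : ℝ))
            + b y * ∑ j, v y j * fderiv ℝ φ y (Pi.single j 1, (0 : ℝ))) = 0)
        ∧ (∫ y, (∑ j, v y j * fderiv ℝ φ y (Pi.single j 1, (0 : ℝ))) = 0)) ∧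
      -- (c) |v| = 1 and |b| = 1 a.e. on Ω
      (∀ᵐ y ∂volume, y ∈ Ω → ((v y 0) ^ 2 + (v y 1) ^ 2 = 1 ∧ |b y| = 1)) ∧
      -- (d) v = 0, b = 0, p = 0 a.e. outside Ω
      (∀ᵐ y ∂volume, y ∉ Ω → (v y = 0 ∧ b y = 0 ∧ p y = 0)) := by
  obtain ⟨z₀, hz₀m, hz₀cl, hz₀off, hz₀def, hz₀G⟩ := convex_integration (μ := (volume : Measure SpT))
    (fun g hg => testFields_continuous hg) (fun g hg => testFields_hasCompactSupport hg)
    zero_mem_subSet (fun u hu => norm_le_of_mem hu) defect_continuous defect_nonneg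
    (fun u hu => defect_le_one hu) hasLocalPert_subSet hΩopen hΩbdd
  have hcl : ∀ u ∈ closure subSet, ‖u‖ ≤ 6 := fun u hu =>
    closure_minimal (fun w hw => norm_le_of_mem hw) (isClosed_le continuous_norm continuous_const) hu
  -- `z` is `z₀` altered on a null set, so that the bound holds everywhere
  set z : SpT → St := {y | ‖z₀ y‖ ≤ 6}.indicator z₀ with hz
  have hzm : Measurable z := hz₀m.indicator (measurableSet_le hz₀m.norm measurable_const)
  have hz6 : ∀ y, ‖z y‖ ≤ 6 := fun y => by
    by_cases h : ‖z₀ y‖ ≤ 6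
    · rwa [hz, Set.indicator_of_mem (show y ∈ {y | ‖z₀ y‖ ≤ 6} from h)]
    · rw [hz, Set.indicator_of_notMem (show y ∉ {y | ‖z₀ y‖ ≤ 6} from h)]; simp
  have hzae : ∀ᵐ y, z y = z₀ y := by
    filter_upwards [hz₀cl] with y hy
    exact Set.indicator_of_mem (show y ∈ {y | ‖z₀ y‖ ≤ 6} from hcl _ hy) _
  have hzG : ∀ ψ : Fin 4 → SpT → ℝ, (∀ r, IsTest (ψ r)) →
      ∫ y, inner ℝ (z y) (testField ψ y) = 0 := by
    intro ψ hψ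
    rw [← hz₀G _ ⟨ψ, hψ, rfl⟩]
    refine integral_congr_ae ?_
    filter_upwards [hzae] with y hy
    rw [hy]
  have hcoord : ∀ c, Measurable fun y => z y c := fun c => by fun_prop
  set p : SpT → ℝ := Ω.indicator fun y => (z y 2 + z y 4 - 1) / 2 with hp
  have hin : ∀ᵐ y, y ∈ Ω → ∃ i, z y 0 = vx i ∧ z y 1 = vy i ∧ z y 3 = vx i * vy i ∧
      z y 2 - z y 4 = vx i ^ 2 - vy i ^ 2 ∧ z y 5 = bb i * vx i ∧ z y 6 = bb i * vy i ∧
      z y 7 = bb i := by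
    filter_upwards [hzae, hz₀cl, hz₀def] with y h1 h2 h3 hy
    rw [h1]
    exact exists_of_defect_eq_zero h2 (h3 hy)
  have hout : ∀ᵐ y, y ∉ Ω → z y = 0 := by
    filter_upwards [hzae, hz₀off] with y h1 h2 hy
    rw [h1, h2 hy]
  -- the nonlinear constraints, valid inside and outside `Ω`
  have hrel : ∀ᵐ y, z y 2 = z y 0 ^ 2 + p y ∧ z y 3 = z y 0 * z y 1 ∧ z y 4 = z y 1 ^ 2 + p y ∧
      z y 5 = z y 7 * z y 0 ∧ z y 6 = z y 7 * z y 1 := by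
    filter_upwards [hin, hout] with y h1 h2
    by_cases hy : y ∈ Ω
    · obtain ⟨i, e0, e1, e3, e24, e5, e6, e7⟩ := h1 hy
      have hu := (vert_unit i).1
      have hpy : p y = (z y 2 + z y 4 - 1) / 2 := Set.indicator_of_mem hy _
      rw [hpy, e0, e1, e3, e5, e6, e7]
      refine ⟨?_, rfl, ?_, rfl, rfl⟩ <;> linarith
    · have hpy : p y = 0 := Set.indicator_of_notMem hy _
      simp [hpy, h2 hy]
  refine ⟨fun y => ![z y 0, z y 1], fun y => z y 7, p, ?_, hcoord 7, ?_, ⟨7, fun y => ⟨?_, ?_, ?_⟩⟩,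
    ?_, ?_, ?_, ?_⟩
  · refine measurable_pi_lambda _ fun c => ?_
    fin_cases c
    · exact hcoord 0
    · exact hcoord 1
  · exact Measurable.indicator (by fun_prop) hΩopen.measurableSet
  · rw [pi_norm_le_iff_of_nonneg (by norm_num)]
    intro c
    have h0 := (abs_coord_le (z y) 0).trans (hz6 y)
    have h1 := (abs_coord_le (z y) 1).trans (hz6 y)
    fin_cases c
    · simp; linarith
    · simp; linarith
  · linarith [(abs_coord_le (z y) 7).trans (hz6 y)]
  · have h2 := abs_le.1 ((abs_coord_le (z y) 2).trans (hz6 y))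
    have h4 := abs_le.1 ((abs_coord_le (z y) 4).trans (hz6 y))
    by_cases hy : y ∈ Ω
    · rw [hp, Set.indicator_of_mem hy, abs_le]
      constructor <;> linarith
    · rw [hp, Set.indicator_of_notMem hy]; norm_num
  · intro Ψ hΨ hΨs
    have ht : ∀ c, IsTest (fun y => Ψ y c) := fun c =>
      ⟨contDiff_pi.1 hΨ c, hΨs.comp_left (g := fun u : Fin 2 → ℝ => u c) rfl⟩
    have hd : ∀ y a c, fderiv ℝ Ψ y a c = pd a (fun y => Ψ y c) y := by
      intro y a c
      have h1 : HasFDerivAt Ψ (fderiv ℝ Ψ y) y :=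
        ((hΨ.differentiable (by simp)).differentiableAt).hasFDerivAt
      have h2 := ((hasFDerivAt_pi'.1 h1) c).fderiv
      simp only [pd, h2]
      rfl
    refine Eq.trans ?_ (hzG ![fun y => Ψ y 0, fun y => Ψ y 1, 0, 0] (by
      intro r; fin_cases r
      · exact ht 0
      · exact ht 1
      · exact isTest_zero
      · exact isTest_zero))
    refine integral_congr_ae ?_
    filter_upwards [hrel] with y hy
    obtain ⟨e2, e3, e4, -, -⟩ := hy
    rw [inner_testField, e2, e3, e4]
    simp only [hd]
    simp [pd_zero, eY]
    ring
  · intro φ hφ hφs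
    constructor
    · refine Eq.trans ?_ (hzG ![0, 0, 0, φ] (by
        intro r; fin_cases r
        · exact isTest_zero
        · exact isTest_zero
        · exact isTest_zero
        · exact ⟨hφ, hφs⟩))
      refine integral_congr_ae ?_
      filter_upwards [hrel] with y hy
      obtain ⟨-, -, -, e5, e6⟩ := hy
      rw [inner_testField, e5, e6]
      simp [eY, pd]
      ring
    · refine Eq.trans ?_ (hzG ![0, 0, φ, 0] (by
        intro r; fin_cases r
        · exact isTest_zero
        · exact isTest_zero
        · exact ⟨hφ, hφs⟩
        · exact isTest_zero))
      congr 1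
      funext y
      rw [inner_testField]
      simp [eY, pd]
  · filter_upwards [hin] with y h1 hy
    obtain ⟨i, e0, e1, -, -, -, -, e7⟩ := h1 hy
    simpa [e0, e1, e7] using vert_unit i
  · filter_upwards [hout] with y h1 hy
    refine ⟨?_, by simp [h1 hy], Set.indicator_of_notMem hy _⟩
    funext c
    fin_cases c <;> simp [h1 hy]
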